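/- Let G be a finite twin-free bipartite graph containing no induced Star_{1,2,3}. Then at least one of the following holds: (1) G admits a Parallel decomposition, i.e., B ∪ W can be partitioned into two nonempty sets that are nonadjacent; (2) G admits a Series decomposition, i.e., B ∪ W can be partitioned into two nonempty sets that are fully adjacent; (3) G admits a K+S decomposition, i.e., B ∪ W can be partitioned into two nonempty sets X and Y with X left adjacent to Y; (4) G is K_{1,3}-free, i.e., every vertex of G has degree at most 2; (5) the bipartite complement of G is K_{1,3}-free, i.e., every vertex of the bipartite complement has degree at most 2. -/

import Mathlib

open Finset

/-- A finite bipartite graph: black vertices `B`, white vertices `W` (disjoint finite sets),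
and an edge set `E ⊆ B × W`. -/
structure BipGraph (V : Type) [DecidableEq V] where
  B : Finset V
  W : Finset V
  disj : Disjoint B W
  E : Set (V × V)
  E_sub : ∀ e ∈ E, e.1 ∈ B ∧ e.2 ∈ W

variable {V : Type} [DecidableEq V]

/-- `(S, T)` is a biclique of `G`. -/
def IsBiclique (G : BipGraph V) (S T : Finset V) : Prop :=
  S ⊆ G.B ∧ T ⊆ G.W ∧ ∀ b ∈ S, ∀ w ∈ T, (b, w) ∈ G.E

/-- `(b, w)` is a bisize of `G`: `G` contains a biclique of size `(b, w)`. -/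
def Bisize (G : BipGraph V) (p : ℕ × ℕ) : Prop :=
  ∃ S T, IsBiclique G S T ∧ S.card = p.1 ∧ T.card = p.2

/-- `Dominates p q` : `p` dominates `q`, i.e. `q.1 ≤ p.1` and `q.2 ≤ p.2`. -/
def Dominates (p q : ℕ × ℕ) : Prop := q.1 ≤ p.1 ∧ q.2 ≤ p.2

/-- A maxbisize of `G` : a bisize not strictly dominated by another bisize. -/
def MaxBisize (G : BipGraph V) (p : ℕ × ℕ) : Prop :=
  Bisize G p ∧ ∀ q, Bisize G q → Dominates q p → q = p

/-- `DD G` is the set of maxbisizes of `G` (denoted `D(G)` in the paper). -/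
def DD (G : BipGraph V) : Set (ℕ × ℕ) := {p | MaxBisize G p}

/-- `Dom X` : the elements of `X` not strictly dominated by another element of `X`. -/
def Dom (X : Set (ℕ × ℕ)) : Set (ℕ × ℕ) := {p ∈ X | ∀ q ∈ X, Dominates q p → q = p}

/-- The induced subgraph `G[M]`. -/
def induce (G : BipGraph V) (M : Finset V) : BipGraph V where
  B := G.B ∩ M
  W := G.W ∩ M
  disj := G.disj.mono inter_subset_left inter_subset_left
  E := {e ∈ G.E | e.1 ∈ M ∧ e.2 ∈ M}
  E_sub := fun e he =>
    ⟨mem_inter.mpr ⟨(G.E_sub e he.1).1, he.2.1⟩, mem_inter.mpr ⟨(G.E_sub e he.1).2, he.2.2⟩⟩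

/-- `X` is nonadjacent to `Y` : no vertex of `X` is adjacent to a vertex of `Y`. -/
def Nonadj (G : BipGraph V) (X Y : Finset V) : Prop :=
  ∀ x ∈ X, ∀ y ∈ Y, (x, y) ∉ G.E ∧ (y, x) ∉ G.E

/-- `X` is fully adjacent to `Y` : every black vertex of `X` is adjacent to every white
vertex of `Y` and every white vertex of `X` is adjacent to every black vertex of `Y`. -/
def FullyAdj (G : BipGraph V) (X Y : Finset V) : Prop :=
  (∀ b ∈ X ∩ G.B, ∀ w ∈ Y ∩ G.W, (b, w) ∈ G.E) ∧
  (∀ b ∈ Y ∩ G.B, ∀ w ∈ X ∩ G.W, (b, w) ∈ G.E)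

/-- `X` is left adjacent to `Y` : every black vertex of `X` is adjacent to every white
vertex of `Y` and no white vertex of `X` is adjacent to a black vertex of `Y`. -/
def LeftAdj (G : BipGraph V) (X Y : Finset V) : Prop :=
  (∀ b ∈ X ∩ G.B, ∀ w ∈ Y ∩ G.W, (b, w) ∈ G.E) ∧
  (∀ b ∈ Y ∩ G.B, ∀ w ∈ X ∩ G.W, (b, w) ∉ G.E)

open Classical in
/-- `X ⊕ Y` with the convention `∅ ⊕ X = X ⊕ ∅ = X`. -/
noncomputable def oplus (X Y : Set (ℕ × ℕ)) : Set (ℕ × ℕ) :=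
  if X = ∅ then Y else if Y = ∅ then X
  else {p | ∃ x ∈ X, ∃ y ∈ Y, p = x + y}

/-- `→_w^z X`. -/
def shiftW (z : ℕ) (X : Set (ℕ × ℕ)) : Set (ℕ × ℕ) := {p | ∃ q ∈ X, p = (q.1, q.2 + z)}

/-- `→_b^z X`. -/
def shiftB (z : ℕ) (X : Set (ℕ × ℕ)) : Set (ℕ × ℕ) := {p | ∃ q ∈ X, p = (q.1 + z, q.2)}

/-- A bimodule of `G`. -/
def Bimodule (G : BipGraph V) (M : Finset V) : Prop :=
  M ⊆ G.B ∪ G.W ∧ ∀ v ∈ (G.B ∪ G.W) \ M, Nonadj G {v} M ∨ FullyAdj G {v} M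

/-- The quotient graph of `G` by a family `M` of bimodules: vertex `(i, true)` is the
black vertex `bᵢ` (present when `Mᵢ ∩ B ≠ ∅`), `(i, false)` the white vertex `wᵢ`. -/
def quotientGraph (G : BipGraph V) {k : ℕ} (M : Fin k → Finset V) :
    BipGraph (Fin k × Bool) where
  B := Finset.univ.filter fun p => p.2 = true ∧ (M p.1 ∩ G.B).Nonempty
  W := Finset.univ.filter fun p => p.2 = false ∧ (M p.1 ∩ G.W).Nonempty
  disj := by
    rw [Finset.disjoint_left]
    intro p hp hq
    simp only [Finset.mem_filter, Finset.mem_univ, true_and] at hp hq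
    rw [hp.1] at hq
    exact Bool.noConfusion hq.1
  E := {e | e.1.2 = true ∧ e.2.2 = false ∧
       ∃ x ∈ M e.1.1 ∩ G.B, ∃ y ∈ M e.2.1 ∩ G.W, (x, y) ∈ G.E}
  E_sub := fun e he => by
    obtain ⟨h1, h2, x, hx, y, hy, _⟩ := he
    constructor <;> simp only [Finset.mem_filter, Finset.mem_univ, true_and]
    · exact ⟨h1, ⟨x, hx⟩⟩
    · exact ⟨h2, ⟨y, hy⟩⟩

/-- `Rroc S` for a set `S` of vertices of the quotient graph. -/
def Rroc (G : BipGraph V) {k : ℕ} (M : Fin k → Finset V)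
    (S : Finset (Fin k × Bool)) : Finset V :=
  S.biUnion fun p => if p.2 then M p.1 ∩ G.B else M p.1 ∩ G.W

/-- `Corr S` for a set `S` of vertices of `G`. -/
def Corr (G : BipGraph V) {k : ℕ} (M : Fin k → Finset V) (C : Finset V) :
    Finset (Fin k × Bool) :=
  Finset.univ.filter fun p =>
    if p.2 then (C ∩ M p.1 ∩ G.B).Nonempty else (C ∩ M p.1 ∩ G.W).Nonempty

/-- `C` is the vertex set of a biclique of `G`. -/
def IsBicliqueVS (G : BipGraph V) (C : Finset V) : Prop :=
  ∃ S T, IsBiclique G S T ∧ S ∪ T = C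

/-- `C` is the vertex set of a maximal biclique of `G`. -/
def MaximalBicliqueVS (G : BipGraph V) (C : Finset V) : Prop :=
  IsBicliqueVS G C ∧ ∀ D, IsBicliqueVS G D → C ⊆ D → C = D

/-- `D_C(Mᵢ)`, the maxbisize set of the bimodule `Mᵢ` with respect to a maximal
biclique `C` of the quotient graph. -/
def DC (G : BipGraph V) {k : ℕ} (M : Fin k → Finset V)
    (C : Finset (Fin k × Bool)) (i : Fin k) : Set (ℕ × ℕ) :=
  if (i, true) ∈ C then
    if (i, false) ∈ C then DD (induce G (M i))
    else {((M i ∩ G.B).card, 0)}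
  else
    if (i, false) ∈ C then {(0, (M i ∩ G.W).card)}
    else ∅

/-- `f 0 ⊕ f 1 ⊕ … ⊕ f (k-1)` (with the convention that `∅` is neutral for `⊕`). -/
noncomputable def oplusFold {k : ℕ} (f : Fin k → Set (ℕ × ℕ)) : Set (ℕ × ℕ) :=
  (List.finRange k).foldr (fun i acc => oplus (f i) acc) ∅

/-- The path on `n` vertices `0, 1, …, n-1`, two-colored alternately; the black
vertices are those whose index has parity `r`. -/
def pathGraph (n r : ℕ) : BipGraph (Fin n) where
  B := Finset.univ.filter fun i => (i : ℕ) % 2 = r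
  W := Finset.univ.filter fun i => (i : ℕ) % 2 ≠ r
  disj := by
    rw [Finset.disjoint_left]
    intro i hi hj
    simp only [Finset.mem_filter, Finset.mem_univ, true_and] at hi hj
    exact hj hi
  E := {e | (e.1 : ℕ) % 2 = r ∧ ((e.1 : ℕ) + 1 = (e.2 : ℕ) ∨ (e.2 : ℕ) + 1 = (e.1 : ℕ))}
  E_sub := fun e he => by
    obtain ⟨h1, h2⟩ := he
    refine ⟨?_, ?_⟩ <;> simp only [Finset.mem_filter, Finset.mem_univ, true_and]
    · exact h1
    · omega

/-- The cycle on `n` vertices `0, 1, …, n-1` (consecutive vertices modulo `n` adjacent),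
two-colored alternately; the black vertices are those whose index has parity `r`. -/
def cycleGraph (n r : ℕ) : BipGraph (Fin n) where
  B := Finset.univ.filter fun i => (i : ℕ) % 2 = r
  W := Finset.univ.filter fun i => (i : ℕ) % 2 ≠ r
  disj := by
    rw [Finset.disjoint_left]
    intro i hi hj
    simp only [Finset.mem_filter, Finset.mem_univ, true_and] at hi hj
    exact hj hi
  E := {e | (e.1 : ℕ) % 2 = r ∧ (e.2 : ℕ) % 2 ≠ r ∧
       (((e.1 : ℕ) + 1) % n = (e.2 : ℕ) ∨ ((e.2 : ℕ) + 1) % n = (e.1 : ℕ))}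
  E_sub := fun e he => by
    obtain ⟨h1, h2, _⟩ := he
    refine ⟨?_, ?_⟩ <;> simp only [Finset.mem_filter, Finset.mem_univ, true_and]
    · exact h1
    · exact h2

/-- The bipartite complement of `G`. -/
def bipCompl (G : BipGraph V) : BipGraph V where
  B := G.B
  W := G.W
  disj := G.disj
  E := {e | e.1 ∈ G.B ∧ e.2 ∈ G.W ∧ e ∉ G.E}
  E_sub := fun _ he => ⟨he.1, he.2.1⟩

/-- `x` and `y` are adjacent in `G`. -/
def Adjv (G : BipGraph V) (x y : V) : Prop := (x, y) ∈ G.E ∨ (y, x) ∈ G.E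

/-- `G` is twin-free: no two distinct vertices have the same set of neighbors. -/
def TwinFree (G : BipGraph V) : Prop :=
  ∀ x ∈ G.B ∪ G.W, ∀ y ∈ G.B ∪ G.W,
    ({z | Adjv G x z} = {z | Adjv G y z}) → x = y

/-- The edges of the skew star `Star_{1,2,3}`: a path `0-1-2-3-4-5` plus a vertex `6`
adjacent only to `2`. -/
def starEdges : List (ℕ × ℕ) := [(0, 1), (1, 2), (2, 3), (3, 4), (4, 5), (2, 6)]

/-- `G` contains no induced `Star_{1,2,3}`. -/
def Star123Free (G : BipGraph V) : Prop :=
  ¬ ∃ v : Fin 7 → V, Function.Injective v ∧ (∀ i, v i ∈ G.B ∪ G.W) ∧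
    ∀ i j : Fin 7, Adjv G (v i) (v j) ↔
      (((i : ℕ), (j : ℕ)) ∈ starEdges ∨ ((j : ℕ), (i : ℕ)) ∈ starEdges)

/-- Every vertex of `G` has degree at most 2 (equivalent to `K_{1,3}`-freeness for
bipartite graphs). -/
def MaxDeg2 (G : BipGraph V) : Prop :=
  ∀ x ∈ G.B ∪ G.W, ({y | Adjv G x y}).ncard ≤ 2

section LozinAux

variable {α β : Type}

def LzC (E : α → β → Prop) : α → β → Prop := fun a c => ¬ E a c
def LzF (E : α → β → Prop) : β → α → Prop := fun c a => E a c

theorem LzC_LzC (E : α → β → Prop) : LzC (LzC E) = E := by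
  funext a c; simp [LzC]

theorem LzC_LzF (E : α → β → Prop) : LzC (LzF E) = LzF (LzC E) := rfl

def LzS (E : α → β → Prop) : Prop := ∀ x1 x3 x5 y2 y4 y6 y7,
  E x1 y2 → E x3 y2 → E x3 y4 → E x5 y4 → E x5 y6 → E x3 y7 →
  ¬ E x1 y4 → ¬ E x1 y6 → ¬ E x1 y7 → ¬ E x3 y6 → ¬ E x5 y2 → ¬ E x5 y7 → False

def LzSF (E : α → β → Prop) : Prop := LzS E ∧ LzS (LzF E)

theorem LzS.co {E : α → β → Prop} (h : LzS E) : LzS (LzC E) := by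
  intro x1 x3 x5 y2 y4 y6 y7
  have := h x3 x1 x5 y6 y7 y2 y4
  simp only [LzC]
  tauto

theorem LzSF.co {E : α → β → Prop} (h : LzSF E) : LzSF (LzC E) := ⟨h.1.co, h.2.co⟩
theorem LzSF.fl {E : α → β → Prop} (h : LzSF E) : LzSF (LzF E) := ⟨h.2, h.1⟩

def LzDec (E : α → β → Prop) : Prop := ∃ (A : Set α) (C : Set β),
  ((∃ a, a ∈ A) ∨ ∃ c, c ∈ C) ∧ ((∃ a, a ∉ A) ∨ ∃ c, c ∉ C) ∧
  ((∀ a c, E a c → (a ∈ A ↔ c ∈ C)) ∨ (∀ a c, ¬ E a c → (a ∈ A ↔ c ∈ C)) ∨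
    (∀ a c, (a ∈ A → c ∉ C → E a c) ∧ (a ∉ A → c ∈ C → ¬ E a c)))

theorem LzDec.co {E : α → β → Prop} (h : LzDec (LzC E)) : LzDec E := by
  obtain ⟨A, C, h1, h2, h3⟩ := h
  rcases h3 with h3 | h3 | h3
  · exact ⟨A, C, h1, h2, Or.inr (Or.inl h3)⟩
  · exact ⟨A, C, h1, h2, Or.inl fun a c h => h3 a c (by simpa [LzC] using h)⟩
  · refine ⟨Aᶜ, Cᶜ, by simpa using h2, by simpa using h1, Or.inr (Or.inr fun a c => ?_)⟩
    have := h3 a c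
    simp only [LzC, Set.mem_compl_iff] at *
    tauto

theorem LzDec.fl {E : α → β → Prop} (h : LzDec (LzF E)) : LzDec E := by
  obtain ⟨A, C, h1, h2, h3⟩ := h
  rcases h3 with h3 | h3 | h3
  · exact ⟨C, A, h1.symm, h2.symm, Or.inl fun a c h => (h3 c a h).symm⟩
  · exact ⟨C, A, h1.symm, h2.symm, Or.inr (Or.inl fun a c h => (h3 c a h).symm)⟩
  · refine ⟨Cᶜ, Aᶜ, by simpa using h2.symm, by simpa using h1.symm,
      Or.inr (Or.inr fun a c => ?_)⟩
    have := h3 c a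
    simp only [LzF, Set.mem_compl_iff] at *
    tauto

structure LzBim (E : α → β → Prop) (A : Set α) (C : Set β) : Prop where
  homA : ∀ a, a ∉ A → (∀ c ∈ C, E a c) ∨ (∀ c ∈ C, ¬ E a c)
  homC : ∀ c, c ∉ C → (∀ a ∈ A, E a c) ∨ (∀ a ∈ A, ¬ E a c)
  w1 : ∃ b ∈ A, ∃ x ∈ C, ∃ y ∈ C, E b x ∧ ¬ E b y
  w2 : ∃ x ∈ C, ∃ b ∈ A, ∃ b' ∈ A, E b x ∧ ¬ E b' x

theorem LzBim.co {E : α → β → Prop} {A : Set α} {C : Set β} (h : LzBim E A C) :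
    LzBim (LzC E) A C := by
  refine ⟨fun a ha => ?_, fun c hc => ?_, ?_, ?_⟩
  · rcases h.homA a ha with h | h
    · exact Or.inr fun c hc hn => hn (h c hc)
    · exact Or.inl h
  · rcases h.homC c hc with h | h
    · exact Or.inr fun c hc hn => hn (h c hc)
    · exact Or.inl h
  · obtain ⟨b, hb, x, hx, y, hy, h1, h2⟩ := h.w1
    exact ⟨b, hb, y, hy, x, hx, h2, fun hn => hn h1⟩
  · obtain ⟨b, hb, x, hx, y, hy, h1, h2⟩ := h.w2
    exact ⟨b, hb, y, hy, x, hx, h2, fun hn => hn h1⟩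

theorem LzBim.fl {E : α → β → Prop} {A : Set α} {C : Set β} (h : LzBim E A C) :
    LzBim (LzF E) C A := ⟨h.homC, h.homA, h.w2, h.w1⟩

/-- outside vertices with no neighbour in the bimodule -/
def LzE (E : α → β → Prop) (A : Set α) (C : Set β) (a : α) : Prop :=
  a ∉ A ∧ ∀ c ∈ C, ¬ E a c

/-- outside vertices adjacent to the whole bimodule -/
def LzU (E : α → β → Prop) (A : Set α) (C : Set β) (a : α) : Prop :=
  a ∉ A ∧ ∀ c ∈ C, E a c

theorem LzE_co (E : α → β → Prop) (A : Set α) (C : Set β) : LzE (LzC E) A C = LzU E A C := by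
  funext a; simp [LzE, LzU, LzC]
theorem LzU_co (E : α → β → Prop) (A : Set α) (C : Set β) : LzU (LzC E) A C = LzE E A C := by
  funext a; simp [LzE, LzU, LzC]

section bim
variable {E : α → β → Prop} {A : Set α} {C : Set β}

theorem Lz_L1 (hS : LzSF E) (hM : LzBim E A C) {f e : α} {d d' : β} (hf : LzU E A C f)
    (he : LzE E A C e) (hd : LzE (LzF E) C A d) (hd' : LzE (LzF E) C A d')
    (h1 : E e d) (h2 : E e d') (h3 : E f d) : E f d' := by
  by_contra h4
  obtain ⟨x, hx, b, hb, b', hb', h5, h6⟩ := hM.w2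
  obtain ⟨b, hb, x, hx, y, hy, h5, h6⟩ := hM.w1
  exact hS.1 b f e x d d' y h5 (hf.2 x hx) h3 h1 h2 (hf.2 y hy) (hd.2 b hb) (hd'.2 b hb) h6
    h4 (he.2 x hx) (he.2 y hy)

theorem Lz_L3 (hS : LzSF E) (hM : LzBim E A C) {f e : α} {d g : β} (hf : LzU E A C f)
    (he : LzE E A C e) (hd : LzE (LzF E) C A d) (hg : LzU (LzF E) C A g)
    (h1 : E e d) (h2 : ¬ E f g) (h3 : E f d) : E e g := by
  by_contra h4
  obtain ⟨b, hb, x, hx, y, hy, h5, h6⟩ := hM.w1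
  exact hS.1 e f b d x g y h1 h3 (hf.2 x hx) h5 (hg.2 b hb) (hf.2 y hy) (he.2 x hx)
    h4 (he.2 y hy) h2 (hd.2 b hb) h6

theorem Lz_L2a (hS : LzSF E) (hM : LzBim E A C) {e e' : α} {d g h : β}
    (he : LzE E A C e) (he' : LzE E A C e') (hd : LzE (LzF E) C A d)
    (hg : LzU (LzF E) C A g) (hh : LzU (LzF E) C A h)
    (h1 : E e d) (h2 : E e g) (h3 : ¬ E e' g) (h4 : E e' h) (h5 : ¬ E e h) : False := by
  by_cases h6 : E e' d
  · exact h3 (Lz_L1 hS.fl hM.fl hg hd he he' h1 h6 h2)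
  obtain ⟨b, hb, x, hx, y, hy, h7, h8⟩ := hM.w1
  exact hS.1 e' b e h g d x h4 (hh.2 b hb) (hg.2 b hb) h2 h1 h7 h3 h6 (he'.2 x hx)
    (hd.2 b hb) h5 (he.2 x hx)

theorem Lz_L2b (hS : LzSF E) (hM : LzBim E A C) {e e' f : α} {d d' g : β}
    (he : LzE E A C e) (he' : LzE E A C e') (hd : LzE (LzF E) C A d)
    (hd' : LzE (LzF E) C A d') (hf : LzU E A C f)
    (hg : LzU (LzF E) C A g) (h1 : E e d) (h1' : E e' d') (h2 : E f d) (h3 : ¬ E f d')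
    (h4 : E e' g) (h5 : ¬ E e g) : False := by
  by_cases h6 : E f g
  · have h7 : ¬ E e d' := fun h => h3 (Lz_L1 hS hM hf he hd hd' h1 h h2)
    have h8 : ¬ E e' d := fun h => h3 (Lz_L1 hS hM hf he' hd hd' h h1' h2)
    obtain ⟨b, hb, x, hx, y, hy, h9, h10⟩ := hM.w1
    exact hS.2 d' g d e' f e b h1' h4 h6 h2 h1 (hg.2 b hb) h3 h7 (hd'.2 b hb) h5 h8 (hd.2 b hb)
  · exact h5 (Lz_L3 hS hM hf he hd hg h1 h6 h2)

/-- minimum edge among the vertices not adjacent to the bimodule -/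
theorem Lz_min [Finite α] [Finite β] (hS : LzSF E) (hM : LzBim E A C)
    (hex : ∃ e d, LzE E A C e ∧ LzE (LzF E) C A d ∧ E e d) :
    ∃ e0 d0, (LzE E A C e0 ∧ LzE (LzF E) C A d0 ∧ E e0 d0) ∧
      ∀ e d, LzE E A C e → LzE (LzF E) C A d → E e d →
        (∀ g, LzU (LzF E) C A g → E e0 g → E e g) ∧ (∀ f, LzU E A C f → E f d0 → E f d) := by
  classical
  let N : α × β → Set (α ⊕ β) := fun p =>
    {x | Sum.elim (fun f => LzU E A C f ∧ E f p.2) (fun g => LzU (LzF E) C A g ∧ E p.1 g) x}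
  obtain ⟨⟨e0, d0⟩, hp, hmin⟩ := Set.exists_min_image
    {p : α × β | LzE E A C p.1 ∧ LzE (LzF E) C A p.2 ∧ E p.1 p.2} (fun p => (N p).ncard)
    (Set.toFinite _) (by obtain ⟨e, d, h⟩ := hex; exact ⟨(e, d), h⟩)
  refine ⟨e0, d0, hp, fun e d he hd hed => ?_⟩
  have hsub : N (e0, d0) ⊆ N (e, d) := by
    by_cases h : N (e, d) ⊆ N (e0, d0)
    · exact (Set.eq_of_subset_of_ncard_le h (hmin (e, d) ⟨he, hd, hed⟩) (Set.toFinite _)).symm.le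
    · by_contra h'
      obtain ⟨x, hx, hx'⟩ := Set.not_subset.1 h
      obtain ⟨y, hy, hy'⟩ := Set.not_subset.1 h'
      obtain ⟨p1, p2, p3⟩ := hp
      rcases x with f | g <;> rcases y with f' | g' <;>
        simp only [N, Set.mem_ofPred_eq, Sum.elim_inl, Sum.elim_inr, not_and] at hx hx' hy hy' p1 p2 p3
      · exact Lz_L2a hS.fl hM.fl hd p2 he hx.1 hy.1 hed hx.2 (hx' hx.1) hy.2 (hy' hy.1)
      · exact Lz_L2b hS hM he p1 hd p2 hx.1 hy.1 hed p3 hx.2 (hx' hx.1) hy.2 (hy' hy.1)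
      · exact Lz_L2b hS hM p1 he p2 hd hy.1 hx.1 p3 hed hy.2 (hy' hy.1) hx.2 (hx' hx.1)
      · exact Lz_L2a hS hM he p1 hd hx.1 hy.1 hed hx.2 (hx' hx.1) hy.2 (hy' hy.1)
  refine ⟨fun g hg h => ?_, fun f hf h => ?_⟩
  · exact (show _ ∧ _ from @hsub (Sum.inr g) ⟨hg, h⟩).2
  · exact (show _ ∧ _ from @hsub (Sum.inl f) ⟨hf, h⟩).2

theorem Lz_K1 (hS : LzSF E) (hM : LzBim E A C) {e0 : α} {d0 : β}
    (he0 : LzE E A C e0) (hd0 : LzE (LzF E) C A d0) (h0 : E e0 d0)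
    (hmin : ∀ e d, LzE E A C e → LzE (LzF E) C A d → E e d →
      (∀ g, LzU (LzF E) C A g → E e0 g → E e g))
    (hc : ∀ g f, LzU (LzF E) C A g → LzU E A C f → E e0 g → E f g)
    (hne : ∃ g, LzU (LzF E) C A g ∧ E e0 g) : LzDec E := by
  obtain ⟨b, hb, x, hx, y, hy, h9, h10⟩ := hM.w1
  obtain ⟨g0, hg0, hg0'⟩ := hne
  refine ⟨{a | ¬ (LzE E A C a ∧ (∀ d, LzE (LzF E) C A d → ¬ E a d) ∧
      (∀ g, LzU (LzF E) C A g → ¬ E e0 g → ¬ E a g))},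
    {c | ¬ (LzU (LzF E) C A c ∧ E e0 c)}, Or.inl ⟨b, fun h => h.1.1 hb⟩, Or.inr ⟨g0, ?_⟩,
    Or.inr (Or.inr fun a c => ⟨fun ha hc' => ?_, fun ha hc' h => ?_⟩)⟩
  · exact fun h => h ⟨hg0, hg0'⟩
  · simp only [Set.mem_ofPred_eq, not_not] at ha hc'
    obtain ⟨hcU, hce⟩ := hc'
    by_cases haA : a ∈ A
    · exact hcU.2 a haA
    rcases hM.homA a haA with hU | hE
    · exact hc c a hcU ⟨haA, hU⟩ hce
    · have haE : LzE E A C a := ⟨haA, hE⟩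
      by_cases h1 : ∃ d, LzE (LzF E) C A d ∧ E a d
      · obtain ⟨d, hd, had⟩ := h1
        exact hmin a d haE hd had c hcU hce
      · by_contra h2
        apply ha
        refine ⟨haE, fun d hd h => h1 ⟨d, hd, h⟩, fun g hg hg1 hg2 => ?_⟩
        exact Lz_L2a hS hM he0 haE hd0 hcU hg h0 hce h2 hg2 hg1
  · simp only [Set.mem_ofPred_eq, not_not] at ha hc'
    obtain ⟨haE, ha1, ha2⟩ := ha
    by_cases hcC : c ∈ C
    · exact haE.2 c hcC h
    rcases hM.homC c hcC with hU | hE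
    · exact ha2 c ⟨hcC, hU⟩ (fun h => hc' ⟨⟨hcC, hU⟩, h⟩) h
    · exact ha1 c ⟨hcC, hE⟩ h

theorem Lz_K (hS : LzSF E) (hM : LzBim E A C) {e0 : α} {d0 : β}
    (he0 : LzE E A C e0) (hd0 : LzE (LzF E) C A d0) (h0 : E e0 d0)
    (hmin : ∀ e d, LzE E A C e → LzE (LzF E) C A d → E e d →
      (∀ g, LzU (LzF E) C A g → E e0 g → E e g) ∧ (∀ f, LzU E A C f → E f d0 → E f d))
    (hc : ∀ g f, LzU (LzF E) C A g → LzU E A C f → (E e0 g ∨ E f d0) → E f g) : LzDec E := by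
  by_cases h1 : ∃ g, LzU (LzF E) C A g ∧ E e0 g
  · exact Lz_K1 hS hM he0 hd0 h0 (fun e d a b c => (hmin e d a b c).1)
      (fun g f a b c => hc g f a b (Or.inl c)) h1
  by_cases h2 : ∃ f, LzU E A C f ∧ E f d0
  · exact LzDec.fl (Lz_K1 hS.fl hM.fl hd0 he0 h0 (fun d e a b c => (hmin e d b a c).2)
      (fun f g a b c => hc g f b a (Or.inr c)) h2)
  push Not at h1 h2
  let P : α → β → Prop := fun e d => LzE E A C e ∧ LzE (LzF E) C A d ∧ E e d ∧
    (∀ g, LzU (LzF E) C A g → ¬ E e g) ∧ (∀ f, LzU E A C f → ¬ E f d)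
  obtain ⟨b, hb, x, hx, y, hy, h9, h10⟩ := hM.w1
  refine ⟨{e | ∃ d, P e d}, {d | ∃ e, P e d}, Or.inl ⟨e0, d0, he0, hd0, h0, h1, h2⟩,
    Or.inl ⟨b, fun ⟨d, h⟩ => h.1.1 hb⟩, Or.inl fun a c hac => ⟨?_, ?_⟩⟩
  · rintro ⟨d, p1, p2, p3, p4, p5⟩
    have hcC : c ∉ C := fun h => p1.2 c h hac
    rcases hM.homC c hcC with hU | hE
    · exact absurd hac (p4 c ⟨hcC, hU⟩)
    · exact ⟨a, p1, ⟨hcC, hE⟩, hac, p4, fun f hf hfc =>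
        p5 f hf (Lz_L1 hS hM hf p1 ⟨hcC, hE⟩ p2 hac p3 hfc)⟩
  · rintro ⟨d, p1, p2, p3, p4, p5⟩
    have hcC : a ∉ A := fun h => p2.2 a h hac
    rcases hM.homA a hcC with hU | hE
    · exact absurd hac (p5 a ⟨hcC, hU⟩)
    · exact ⟨c, ⟨hcC, hE⟩, p2, hac, fun f hf hfc =>
        p4 f hf (Lz_L1 hS.fl hM.fl hf p2 ⟨hcC, hE⟩ p1 hac p3 hfc), p5⟩

theorem Lz_bim1 [Finite α] [Finite β] (hS : LzSF E) (hM : LzBim E A C)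
    (hex : ∃ e d, LzE E A C e ∧ LzE (LzF E) C A d ∧ E e d) : LzDec E := by
  obtain ⟨e0, d0, ⟨he0, hd0, h0⟩, hmin⟩ := Lz_min hS hM hex
  by_cases hc : ∀ g f, LzU (LzF E) C A g → LzU E A C f → (E e0 g ∨ E f d0) → E f g
  · exact Lz_K hS hM he0 hd0 h0 hmin hc
  push Not at hc
  obtain ⟨g, f, hg, hf, hor, hfg⟩ := hc
  have hb : E e0 g ∧ E f d0 := by
    rcases hor with h | h
    · exact ⟨h, Lz_L3 hS.fl hM.fl hg hd0 he0 hf h0 hfg h⟩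
    · exact ⟨Lz_L3 hS hM hf he0 hd0 hg h0 hfg h, h⟩
  obtain ⟨f1, g1, ⟨hf1, hg1, h1⟩, hmin1⟩ := Lz_min hS.co hM.co
    ⟨f, g, by rwa [LzE_co], by rw [← LzC_LzF, LzE_co]; exact hg, hfg⟩
  refine LzDec.co (Lz_K hS.co hM.co hf1 hg1 h1 hmin1 ?_)
  rw [← LzC_LzF, LzU_co, LzU_co]
  intro d e hd he hor' hed
  have hed : E e d := by simpa [LzC] using hed
  have hm := hmin1 f g (by rwa [LzE_co]) (by rw [← LzC_LzF, LzE_co]; exact hg) hfg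
  rw [← LzC_LzF, LzU_co, LzU_co] at hm
  have hm0 := hmin e d he hd hed
  rcases hor' with h | h
  · exact hm.1 d hd h (hm0.2 f hf hb.2)
  · exact hm.2 e he h (hm0.1 g hg hb.1)

theorem Lz_bim [Finite α] [Finite β] (hS : LzSF E) (hM : LzBim E A C)
    (hne : (∃ a, a ∉ A) ∨ ∃ c, c ∉ C) : LzDec E := by
  by_cases h1 : ∃ e d, LzE E A C e ∧ LzE (LzF E) C A d ∧ E e d
  · exact Lz_bim1 hS hM h1
  by_cases h2 : ∃ e d, LzU E A C e ∧ LzU (LzF E) C A d ∧ ¬ E e d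
  · refine LzDec.co (Lz_bim1 hS.co hM.co ?_)
    rw [← LzC_LzF, LzE_co, LzE_co]
    exact h2
  push Not at h1 h2
  have hA : ∀ a, a ∈ A ∨ LzU E A C a ∨ LzE E A C a := fun a => by
    by_cases h : a ∈ A
    · exact Or.inl h
    · rcases hM.homA a h with h' | h'
      · exact Or.inr (Or.inl ⟨h, h'⟩)
      · exact Or.inr (Or.inr ⟨h, h'⟩)
  have hC : ∀ a, a ∈ C ∨ LzU (LzF E) C A a ∨ LzE (LzF E) C A a := fun a => by
    by_cases h : a ∈ C
    · exact Or.inl h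
    · rcases hM.homC a h with h' | h'
      · exact Or.inr (Or.inl ⟨h, h'⟩)
      · exact Or.inr (Or.inr ⟨h, h'⟩)
  obtain ⟨b, hb, x, hx, y, hy, h9, h10⟩ := hM.w1
  by_cases h3 : (∃ a, LzU E A C a) ∨ ∃ c, LzE (LzF E) C A c
  · refine ⟨{a | LzU E A C a}, {c | LzE (LzF E) C A c}, h3, Or.inl ⟨b, fun h => h.1 hb⟩,
      Or.inr (Or.inr fun a c => ⟨fun ha hc => ?_, fun ha hc => ?_⟩)⟩
    · rcases hC c with h | h | h
      · exact ha.2 c h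
      · exact h2 a c ha h
      · exact absurd h hc
    · rcases hA a with h | h | h
      · exact hc.2 a h
      · exact absurd h ha
      · exact h1 a c h hc
  · refine ⟨{a | ¬ LzE E A C a}, {c | ¬ LzU (LzF E) C A c}, Or.inl ⟨b, fun h => h.1 hb⟩, ?_,
      Or.inr (Or.inr fun a c => ⟨fun ha hc => ?_, fun ha hc => ?_⟩)⟩
    · push Not at h3
      rcases hne with ⟨a, ha⟩ | ⟨c, hc⟩
      · rcases hA a with h | h | h
        · exact absurd h ha
        · exact absurd h (h3.1 a)
        · exact Or.inl ⟨a, fun h' => h' h⟩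
      · rcases hC c with h | h | h
        · exact absurd h hc
        · exact Or.inr ⟨c, fun h' => h' h⟩
        · exact absurd h (h3.2 c)
    · simp only [Set.mem_ofPred_eq, not_not] at ha hc
      rcases hA a with h | h | h
      · exact hc.2 a h
      · exact h2 a c h hc
      · exact absurd h ha
    · simp only [Set.mem_ofPred_eq, not_not] at ha hc
      rcases hC c with h | h | h
      · exact ha.2 c h
      · exact absurd h hc
      · exact h1 a c ha h

end bim
end LozinAux
section LozinPath

variable {α β : Type}

/-- induced path a1 c1 a2 c2 a3 c3 a4 -/
def LzP7 (E : α → β → Prop) (a1 a2 a3 a4 : α) (c1 c2 c3 : β) : Prop :=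
  (E a1 c1 ∧ E a2 c1 ∧ ¬ E a3 c1 ∧ ¬ E a4 c1) ∧ (¬ E a1 c2 ∧ E a2 c2 ∧ E a3 c2 ∧ ¬ E a4 c2) ∧
  (¬ E a1 c3 ∧ ¬ E a2 c3 ∧ E a3 c3 ∧ E a4 c3)

/-- induced path a1 c1 a2 c2 a3 c3 a4 c4 -/
def LzP8 (E : α → β → Prop) (a1 a2 a3 a4 : α) (c1 c2 c3 c4 : β) : Prop :=
  LzP7 E a1 a2 a3 a4 c1 c2 c3 ∧ (¬ E a1 c4 ∧ ¬ E a2 c4 ∧ ¬ E a3 c4 ∧ E a4 c4)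

def LzT (E : α → β → Prop) : Prop :=
  (∀ z z', (∀ a, E a z ↔ E a z') → z = z') ∧ (∀ a a', (∀ z, E a z ↔ E a' z) → a = a')

theorem LzT.fl {E : α → β → Prop} (h : LzT E) : LzT (LzF E) := ⟨h.2, h.1⟩
theorem LzT.co {E : α → β → Prop} (h : LzT E) : LzT (LzC E) :=
  ⟨fun z z' H => h.1 z z' fun a => not_iff_not.1 (H a),
    fun z z' H => h.2 z z' fun a => not_iff_not.1 (H a)⟩

def LzD2 (E : α → β → Prop) : Prop :=
  (∀ a, ∀ x y z, E a x → E a y → E a z → x = y ∨ x = z ∨ y = z) ∧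
  (∀ c, ∀ x y z, E x c → E y c → E z c → x = y ∨ x = z ∨ y = z)

theorem LzD2.fl {E : α → β → Prop} (h : LzD2 (LzF E)) : LzD2 E := ⟨h.2, h.1⟩

variable {E : α → β → Prop} {a1 a2 a3 a4 : α} {c1 c2 c3 c4 : β}

theorem LzP8.rev (h : LzP8 E a1 a2 a3 a4 c1 c2 c3 c4) : LzP8 (LzF E) c4 c3 c2 c1 a4 a3 a2 a1 := by
  simp only [LzP8, LzP7, LzF] at *; tauto

theorem LzP8.tyW (hS : LzSF E) (h : LzP8 E a1 a2 a3 a4 c1 c2 c3 c4) (z : β) :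
    (E a1 z ∧ E a2 z ∧ E a3 z ∧ E a4 z) ∨ (¬ E a1 z ∧ ¬ E a2 z ∧ ¬ E a3 z ∧ ¬ E a4 z) ∨
    (E a1 z ∧ E a2 z ∧ ¬ E a3 z ∧ ¬ E a4 z) ∨ (¬ E a1 z ∧ E a2 z ∧ E a3 z ∧ ¬ E a4 z) ∨
    (¬ E a1 z ∧ ¬ E a2 z ∧ E a3 z ∧ E a4 z) ∨ (¬ E a1 z ∧ ¬ E a2 z ∧ ¬ E a3 z ∧ E a4 z) ∨
    (E a1 z ∧ ¬ E a2 z ∧ ¬ E a3 z ∧ ¬ E a4 z) := by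
  have i1 := hS.1 a1 a3 a4 z c3 c4 c2
  have i2 := hS.1 a1 a4 a3 z c3 c2 c4
  have i3 := hS.2 c4 z c1 a4 a1 a2 a3
  have i4 := hS.1 a1 a2 a4 c1 z c3 c2
  have i5 := hS.1 a1 a2 a3 c1 c2 c3 z
  have i6 := hS.1 a2 a3 a4 c2 c3 c4 z
  simp only [LzF] at i3
  simp only [LzP8, LzP7] at h
  grind

theorem LzP8.tyB (hS : LzSF E) (h : LzP8 E a1 a2 a3 a4 c1 c2 c3 c4) (z : α) :
    (E z c4 ∧ E z c3 ∧ E z c2 ∧ E z c1) ∨ (¬ E z c4 ∧ ¬ E z c3 ∧ ¬ E z c2 ∧ ¬ E z c1) ∨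
    (E z c4 ∧ E z c3 ∧ ¬ E z c2 ∧ ¬ E z c1) ∨ (¬ E z c4 ∧ E z c3 ∧ E z c2 ∧ ¬ E z c1) ∨
    (¬ E z c4 ∧ ¬ E z c3 ∧ E z c2 ∧ E z c1) ∨ (¬ E z c4 ∧ ¬ E z c3 ∧ ¬ E z c2 ∧ E z c1) ∨
    (E z c4 ∧ ¬ E z c3 ∧ ¬ E z c2 ∧ ¬ E z c1) :=
  h.rev.tyW hS.fl z

theorem LzP8.tw_aux1 (hS : LzSF E) (h : LzP8 E a1 a2 a3 a4 c1 c2 c3 c4) {z : β}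
    (h' : LzP8 E a1 a2 a3 a4 z c2 c3 c4) (y : α) (h1 : E y c1) : E y z := by
  by_contra h2
  have t1 := h.tyB hS y
  have t2 := h'.tyB hS y
  have i := hS.1 y a2 a3 c1 c2 c3 z
  simp only [LzP8, LzP7, LzF] at *
  grind

theorem LzP8.tw_aux2 (hS : LzSF E) (h : LzP8 E a1 a2 a3 a4 c1 c2 c3 c4) {z : β}
    (h' : LzP8 E a1 a2 a3 a4 c1 z c3 c4) (y : α) (h1 : E y c2) : E y z := by
  by_contra h2
  have t1 := h.tyB hS y
  have t2 := h'.tyB hS y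
  have i := hS.1 a4 a3 y c3 c2 c1 z
  simp only [LzP8, LzP7, LzF] at *
  grind

theorem LzP8.tw_aux3 (hS : LzSF E) (h : LzP8 E a1 a2 a3 a4 c1 c2 c3 c4) {z : β}
    (h' : LzP8 E a1 a2 a3 a4 c1 c2 z c4) (y : α) (h1 : E y c3) : E y z := by
  by_contra h2
  have t1 := h.tyB hS y
  have t2 := h'.tyB hS y
  have i := hS.1 a2 a3 y c2 c3 c4 z
  simp only [LzP8, LzP7, LzF] at *
  grind

theorem LzP8.tw_aux4 (hS : LzSF E) (h : LzP8 E a1 a2 a3 a4 c1 c2 c3 c4) {z : β}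
    (h' : LzP8 E a1 a2 a3 a4 c1 c2 c3 z) (y : α) (h1 : E y c4) : E y z := by
  by_contra h2
  have t1 := h.tyB hS y
  have t2 := h'.tyB hS y
  have i := hS.1 y a4 a3 c4 c3 c2 z
  simp only [LzP8, LzP7, LzF] at *
  grind

/-- types of white vertices with respect to an induced P8 -/
theorem LzP8.clW (hS : LzSF E) (hT : LzT E) (h : LzP8 E a1 a2 a3 a4 c1 c2 c3 c4) (z : β) :
    (E a1 z ∧ E a2 z ∧ E a3 z ∧ E a4 z) ∨ (¬ E a1 z ∧ ¬ E a2 z ∧ ¬ E a3 z ∧ ¬ E a4 z) ∨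
    z = c1 ∨ z = c2 ∨ z = c3 ∨ z = c4 ∨
    (E a1 z ∧ ¬ E a2 z ∧ ¬ E a3 z ∧ ¬ E a4 z) := by
  rcases h.tyW hS z with t | t | t | t | t | t | t
  · exact Or.inl t
  · exact Or.inr (Or.inl t)
  · have h' : LzP8 E a1 a2 a3 a4 z c2 c3 c4 := ⟨⟨t, h.1.2⟩, h.2⟩
    have := hT.1 z c1 fun y => ⟨h'.tw_aux1 hS h y, h.tw_aux1 hS h' y⟩
    tauto
  · have h' : LzP8 E a1 a2 a3 a4 c1 z c3 c4 := ⟨⟨h.1.1, t, h.1.2.2⟩, h.2⟩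
    have := hT.1 z c2 fun y => ⟨h'.tw_aux2 hS h y, h.tw_aux2 hS h' y⟩
    tauto
  · have h' : LzP8 E a1 a2 a3 a4 c1 c2 z c4 := ⟨⟨h.1.1, h.1.2.1, t⟩, h.2⟩
    have := hT.1 z c3 fun y => ⟨h'.tw_aux3 hS h y, h.tw_aux3 hS h' y⟩
    tauto
  · have h' : LzP8 E a1 a2 a3 a4 c1 c2 c3 z := ⟨h.1, t⟩
    have := hT.1 z c4 fun y => ⟨h'.tw_aux4 hS h y, h.tw_aux4 hS h' y⟩
    tauto
  · tauto

theorem LzP8.clB (hS : LzSF E) (hT : LzT E) (h : LzP8 E a1 a2 a3 a4 c1 c2 c3 c4) (z : α) :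
    (E z c4 ∧ E z c3 ∧ E z c2 ∧ E z c1) ∨ (¬ E z c4 ∧ ¬ E z c3 ∧ ¬ E z c2 ∧ ¬ E z c1) ∨
    z = a4 ∨ z = a3 ∨ z = a2 ∨ z = a1 ∨
    (E z c4 ∧ ¬ E z c3 ∧ ¬ E z c2 ∧ ¬ E z c1) := h.rev.clW hS.fl hT.fl z

/-- shift by a white vertex -/
theorem LzP8.shW (h : LzP8 E a1 a2 a3 a4 c1 c2 c3 c4) {z : β}
    (t : E a1 z ∧ ¬ E a2 z ∧ ¬ E a3 z ∧ ¬ E a4 z) : LzP8 E a4 a3 a2 a1 c3 c2 c1 z := by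
  simp only [LzP8, LzP7] at *; tauto

theorem LzP8.shB (h : LzP8 E a1 a2 a3 a4 c1 c2 c3 c4) {y : α}
    (t : E y c4 ∧ ¬ E y c3 ∧ ¬ E y c2 ∧ ¬ E y c1) : LzP8 E y a4 a3 a2 c4 c3 c2 c1 := by
  simp only [LzP8, LzP7] at *; tauto

theorem LzP8.extW (hS : LzSF E) (hT : LzT E) (h : LzP8 E a1 a2 a3 a4 c1 c2 c3 c4) {z z' : β}
    (t : E a1 z ∧ ¬ E a2 z ∧ ¬ E a3 z ∧ ¬ E a4 z)
    (t' : E a1 z' ∧ ¬ E a2 z' ∧ ¬ E a3 z' ∧ ¬ E a4 z') : z' = z := by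
  have := (h.shW t).clW hS hT z'
  simp only [LzP8, LzP7] at h
  grind

theorem LzP8.extB (hS : LzSF E) (hT : LzT E) (h : LzP8 E a1 a2 a3 a4 c1 c2 c3 c4) {z z' : α}
    (t : E z c4 ∧ ¬ E z c3 ∧ ¬ E z c2 ∧ ¬ E z c1)
    (t' : E z' c4 ∧ ¬ E z' c3 ∧ ¬ E z' c2 ∧ ¬ E z' c1) : z' = z :=
  h.rev.extW hS.fl hT.fl t t'

inductive LzR (E : α → β → Prop) (b1 b2 b3 b4 : α) (d1 d2 d3 d4 : β) :
    α → α → α → α → β → β → β → β → Prop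
  | base : LzR E b1 b2 b3 b4 d1 d2 d3 d4 b1 b2 b3 b4 d1 d2 d3 d4
  | left {a1 a2 a3 a4 : α} {c1 c2 c3 c4 : β} (z : β) : LzR E b1 b2 b3 b4 d1 d2 d3 d4 a1 a2 a3 a4 c1 c2 c3 c4 →
      (E a1 z ∧ ¬ E a2 z ∧ ¬ E a3 z ∧ ¬ E a4 z) →
      LzR E b1 b2 b3 b4 d1 d2 d3 d4 a4 a3 a2 a1 c3 c2 c1 z
  | right {a1 a2 a3 a4 : α} {c1 c2 c3 c4 : β} (y : α) : LzR E b1 b2 b3 b4 d1 d2 d3 d4 a1 a2 a3 a4 c1 c2 c3 c4 →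
      (E y c4 ∧ ¬ E y c3 ∧ ¬ E y c2 ∧ ¬ E y c1) →
      LzR E b1 b2 b3 b4 d1 d2 d3 d4 y a4 a3 a2 c4 c3 c2 c1

variable {b1 b2 b3 b4 : α} {d1 d2 d3 d4 : β}

theorem LzR.p8 (h0 : LzP8 E b1 b2 b3 b4 d1 d2 d3 d4)
    (h : LzR E b1 b2 b3 b4 d1 d2 d3 d4 a1 a2 a3 a4 c1 c2 c3 c4) :
    LzP8 E a1 a2 a3 a4 c1 c2 c3 c4 := by
  induction h with
  | base => exact h0
  | left z _ t ih => exact ih.shW t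
  | right y _ t ih => exact ih.shB t

theorem LzR.fullW (hS : LzSF E) (hT : LzT E) (h0 : LzP8 E b1 b2 b3 b4 d1 d2 d3 d4)
    (h : LzR E b1 b2 b3 b4 d1 d2 d3 d4 a1 a2 a3 a4 c1 c2 c3 c4) (v : β) :
    (E a1 v ∧ E a2 v ∧ E a3 v ∧ E a4 v) ↔ (E b1 v ∧ E b2 v ∧ E b3 v ∧ E b4 v) := by
  induction h with
  | base => rfl
  | left z _ t ih => rw [← ih]; tauto
  | right y hr t ih =>
    rw [← ih]
    have q1 := LzR.p8 h0 hr
    have q2 := q1.shB t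
    have t1 := q1.tyW hS v
    have t2 := q2.tyW hS v
    simp only [LzP8, LzP7] at q1 q2
    grind

theorem LzR.fullB (hS : LzSF E) (hT : LzT E) (h0 : LzP8 E b1 b2 b3 b4 d1 d2 d3 d4)
    (h : LzR E b1 b2 b3 b4 d1 d2 d3 d4 a1 a2 a3 a4 c1 c2 c3 c4) (v : α) :
    (E v c1 ∧ E v c2 ∧ E v c3 ∧ E v c4) ↔ (E v d1 ∧ E v d2 ∧ E v d3 ∧ E v d4) := by
  induction h with
  | base => rfl
  | right z _ t ih => rw [← ih]; tauto
  | left y hr t ih =>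
    rw [← ih]
    have q1 := LzR.p8 h0 hr
    have q2 := q1.shW t
    have t1 := q1.tyB hS v
    have t2 := q2.tyB hS v
    simp only [LzP8, LzP7, LzF] at q1 q2 t1 t2
    grind

def LzMB (E : α → β → Prop) (b1 b2 b3 b4 : α) (d1 d2 d3 d4 : β) : Set α :=
  {v | ∃ a1 a2 a3 a4 c1 c2 c3 c4, LzR E b1 b2 b3 b4 d1 d2 d3 d4 a1 a2 a3 a4 c1 c2 c3 c4 ∧
    (v = a1 ∨ v = a2 ∨ v = a3 ∨ v = a4)}
def LzMW (E : α → β → Prop) (b1 b2 b3 b4 : α) (d1 d2 d3 d4 : β) : Set β :=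
  {v | ∃ a1 a2 a3 a4 c1 c2 c3 c4, LzR E b1 b2 b3 b4 d1 d2 d3 d4 a1 a2 a3 a4 c1 c2 c3 c4 ∧
    (v = c1 ∨ v = c2 ∨ v = c3 ∨ v = c4)}

theorem LzR.outW (hS : LzSF E) (hT : LzT E) (h0 : LzP8 E b1 b2 b3 b4 d1 d2 d3 d4)
    (h : LzR E b1 b2 b3 b4 d1 d2 d3 d4 a1 a2 a3 a4 c1 c2 c3 c4) (v : β)
    (hv : v ∉ LzMW E b1 b2 b3 b4 d1 d2 d3 d4) :
    (E a1 v ∧ E a2 v ∧ E a3 v ∧ E a4 v) ∨ (¬ E a1 v ∧ ¬ E a2 v ∧ ¬ E a3 v ∧ ¬ E a4 v) := by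
  rcases (h.p8 h0).clW hS hT v with t | t | t | t | t | t | t
  · exact Or.inl t
  · exact Or.inr t
  · exact absurd ⟨_, _, _, _, _, _, _, _, h, by tauto⟩ hv
  · exact absurd ⟨_, _, _, _, _, _, _, _, h, by tauto⟩ hv
  · exact absurd ⟨_, _, _, _, _, _, _, _, h, by tauto⟩ hv
  · exact absurd ⟨_, _, _, _, _, _, _, _, h, by tauto⟩ hv
  · exact absurd ⟨_, _, _, _, _, _, _, _, h.left v t, by tauto⟩ hv

theorem LzR.outB (hS : LzSF E) (hT : LzT E) (h0 : LzP8 E b1 b2 b3 b4 d1 d2 d3 d4)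
    (h : LzR E b1 b2 b3 b4 d1 d2 d3 d4 a1 a2 a3 a4 c1 c2 c3 c4) (v : α)
    (hv : v ∉ LzMB E b1 b2 b3 b4 d1 d2 d3 d4) :
    (E v c1 ∧ E v c2 ∧ E v c3 ∧ E v c4) ∨ (¬ E v c1 ∧ ¬ E v c2 ∧ ¬ E v c3 ∧ ¬ E v c4) := by
  rcases (h.p8 h0).clB hS hT v with t | t | t | t | t | t | t
  · exact Or.inl (by tauto)
  · exact Or.inr (by tauto)
  · exact absurd ⟨_, _, _, _, _, _, _, _, h, by tauto⟩ hv
  · exact absurd ⟨_, _, _, _, _, _, _, _, h, by tauto⟩ hv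
  · exact absurd ⟨_, _, _, _, _, _, _, _, h, by tauto⟩ hv
  · exact absurd ⟨_, _, _, _, _, _, _, _, h, by tauto⟩ hv
  · exact absurd ⟨_, _, _, _, _, _, _, _, h.right v t, by tauto⟩ hv

theorem Lz_bim8 (hS : LzSF E) (hT : LzT E) (h0 : LzP8 E b1 b2 b3 b4 d1 d2 d3 d4) :
    LzBim E (LzMB E b1 b2 b3 b4 d1 d2 d3 d4) (LzMW E b1 b2 b3 b4 d1 d2 d3 d4) := by
  have base := LzR.base (E := E) (b1 := b1) (b2 := b2) (b3 := b3) (b4 := b4) (d1 := d1)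
    (d2 := d2) (d3 := d3) (d4 := d4)
  refine ⟨fun a ha => ?_, fun c hc => ?_, ?_, ?_⟩
  · rcases base.outB hS hT h0 a ha with h | h
    · left
      rintro c ⟨a1, a2, a3, a4, c1, c2, c3, c4, hr, hc⟩
      have := (hr.fullB hS hT h0 a).2 h
      grind
    · right
      rintro c ⟨a1, a2, a3, a4, c1, c2, c3, c4, hr, hc⟩
      have := (hr.fullB hS hT h0 a)
      have := hr.outB hS hT h0 a ha
      grind
  · rcases base.outW hS hT h0 c hc with h | h
    · left
      rintro a ⟨a1, a2, a3, a4, c1, c2, c3, c4, hr, ha⟩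
      have := (hr.fullW hS hT h0 c).2 h
      grind
    · right
      rintro a ⟨a1, a2, a3, a4, c1, c2, c3, c4, hr, ha⟩
      have := (hr.fullW hS hT h0 c)
      have := hr.outW hS hT h0 c hc
      grind
  · exact ⟨b1, ⟨_, _, _, _, _, _, _, _, base, by tauto⟩, d1, ⟨_, _, _, _, _, _, _, _, base, by tauto⟩,
      d2, ⟨_, _, _, _, _, _, _, _, base, by tauto⟩, h0.1.1.1, h0.1.2.1.1⟩
  · exact ⟨d1, ⟨_, _, _, _, _, _, _, _, base, by tauto⟩, b1, ⟨_, _, _, _, _, _, _, _, base, by tauto⟩,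
      b3, ⟨_, _, _, _, _, _, _, _, base, by tauto⟩, h0.1.1.1, h0.1.1.2.2.1⟩

theorem Lz_P8 [Finite α] [Finite β] (hS : LzSF E) (hT : LzT E)
    (h0 : LzP8 E b1 b2 b3 b4 d1 d2 d3 d4) : LzDec E ∨ LzD2 E := by
  by_cases hne : (∃ a, a ∉ LzMB E b1 b2 b3 b4 d1 d2 d3 d4) ∨ ∃ c, c ∉ LzMW E b1 b2 b3 b4 d1 d2 d3 d4
  · exact Or.inl (Lz_bim hS (Lz_bim8 hS hT h0) hne)
  right
  push Not at hne
  have nfW : ∀ v, ¬ (E b1 v ∧ E b2 v ∧ E b3 v ∧ E b4 v) := by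
    intro v hv
    obtain ⟨a1, a2, a3, a4, c1, c2, c3, c4, hr, h⟩ := hne.2 v
    have h1 := (hr.fullW hS hT h0 v).2 hv
    have h2 := hr.p8 h0
    simp only [LzP8, LzP7] at h2
    grind
  have nfB : ∀ v, ¬ (E v d1 ∧ E v d2 ∧ E v d3 ∧ E v d4) := by
    intro v hv
    obtain ⟨a1, a2, a3, a4, c1, c2, c3, c4, hr, h⟩ := hne.1 v
    have h1 := (hr.fullB hS hT h0 v).2 hv
    have h2 := hr.p8 h0
    simp only [LzP8, LzP7] at h2
    grind
  constructor
  · intro a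
    obtain ⟨a1, a2, a3, a4, c1, c2, c3, c4, hr, h⟩ := hne.1 a
    have q := hr.p8 h0
    have nf : ∀ v, ¬ (E a1 v ∧ E a2 v ∧ E a3 v ∧ E a4 v) := fun v => by
      rw [hr.fullW hS hT h0 v]; exact nfW v
    have cl := fun v => q.clW hS hT v
    have ex := fun z z' => q.extW hS hT (z := z) (z' := z')
    simp only [LzP8, LzP7] at q
    have key : ∃ u w, ∀ v, E a v → v = u ∨ v = w := by
      rcases h with h | h | h | h
      · by_cases hz : ∃ z, (E a1 z ∧ ¬ E a2 z ∧ ¬ E a3 z ∧ ¬ E a4 z)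
        · obtain ⟨z, hz⟩ := hz
          refine ⟨c1, z, fun v hv => ?_⟩
          have := cl v; have := nf v; have := ex z v hz
          grind
        · refine ⟨c1, c1, fun v hv => ?_⟩
          have := cl v; have := nf v
          grind
      · refine ⟨c1, c2, fun v hv => ?_⟩
        have := cl v; have := nf v
        grind
      · refine ⟨c2, c3, fun v hv => ?_⟩
        have := cl v; have := nf v
        grind
      · refine ⟨c3, c4, fun v hv => ?_⟩
        have := cl v; have := nf v
        grind
    obtain ⟨u, w, key⟩ := key
    intro x y z hx hy hz
    have := key x hx; have := key y hy; have := key z hz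
    grind
  · intro c
    obtain ⟨a1, a2, a3, a4, c1, c2, c3, c4, hr, h⟩ := hne.2 c
    have q := hr.p8 h0
    have nf : ∀ v, ¬ (E v c1 ∧ E v c2 ∧ E v c3 ∧ E v c4) := fun v => by
      rw [hr.fullB hS hT h0 v]; exact nfB v
    have cl := fun v => q.clB hS hT v
    have ex := fun z z' => q.extB hS hT (z := z) (z' := z')
    simp only [LzP8, LzP7] at q
    have key : ∃ u w, ∀ v, E v c → v = u ∨ v = w := by
      rcases h with h | h | h | h
      · refine ⟨a1, a2, fun v hv => ?_⟩
        have := cl v; have := nf v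
        grind
      · refine ⟨a2, a3, fun v hv => ?_⟩
        have := cl v; have := nf v
        grind
      · refine ⟨a3, a4, fun v hv => ?_⟩
        have := cl v; have := nf v
        grind
      · by_cases hz : ∃ z, (E z c4 ∧ ¬ E z c3 ∧ ¬ E z c2 ∧ ¬ E z c1)
        · obtain ⟨z, hz⟩ := hz
          refine ⟨a4, z, fun v hv => ?_⟩
          have := cl v; have := nf v; have := ex z v hz
          grind
        · refine ⟨a4, a4, fun v hv => ?_⟩
          have := cl v; have := nf v
          grind
    obtain ⟨u, w, key⟩ := key
    intro x y z hx hy hz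
    have := key x hx; have := key y hy; have := key z hz
    grind

end LozinPath
section LozinP7

variable {α β : Type} {E : α → β → Prop} {a1 a2 a3 a4 : α} {c1 c2 c3 : β}

def LzN8 (E : α → β → Prop) : Prop :=
  (∀ a1 a2 a3 a4 c1 c2 c3 c4, ¬ LzP8 E a1 a2 a3 a4 c1 c2 c3 c4) ∧
  (∀ a1 a2 a3 a4 c1 c2 c3 c4, ¬ LzP8 (LzC E) a1 a2 a3 a4 c1 c2 c3 c4)

theorem LzP7.tyW (hS : LzSF E) (hN : LzN8 E) (h : LzP7 E a1 a2 a3 a4 c1 c2 c3) (z : β) :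
    (E a1 z ∧ E a2 z ∧ E a3 z ∧ E a4 z) ∨ (¬ E a1 z ∧ ¬ E a2 z ∧ ¬ E a3 z ∧ ¬ E a4 z) ∨
    (E a1 z ∧ E a2 z ∧ ¬ E a3 z ∧ ¬ E a4 z) ∨ (¬ E a1 z ∧ E a2 z ∧ E a3 z ∧ ¬ E a4 z) ∨
    (¬ E a1 z ∧ ¬ E a2 z ∧ E a3 z ∧ E a4 z) ∨ (E a1 z ∧ ¬ E a2 z ∧ ¬ E a3 z ∧ E a4 z) := by
  have i1 := hS.1 a4 a3 a1 c3 z c1 c2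
  have i2 := hS.1 a1 a2 a4 c1 z c3 c2
  have i3 := hS.1 a1 a2 a3 c1 c2 c3 z
  have i4 := hS.1 a4 a3 a2 c3 c2 c1 z
  have j1 := hN.1 a1 a2 a3 a4 c1 c2 c3 z
  have j2 := hN.1 a4 a3 a2 a1 c3 c2 c1 z
  have j3 := hN.2 a3 a4 a1 a2 c1 c2 c3 z
  have j4 := hN.2 a2 a1 a4 a3 c3 c2 c1 z
  simp only [LzP8, LzP7, LzC] at h j1 j2 j3 j4
  grind

theorem LzP7.tyB (hS : LzSF E) (h : LzP7 E a1 a2 a3 a4 c1 c2 c3) (y : α) :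
    (E y c1 ∧ E y c2 ∧ E y c3) ∨ (¬ E y c1 ∧ ¬ E y c2 ∧ ¬ E y c3) ∨
    (E y c1 ∧ E y c2 ∧ ¬ E y c3) ∨ (E y c1 ∧ ¬ E y c2 ∧ ¬ E y c3) ∨
    (¬ E y c1 ∧ E y c2 ∧ E y c3) ∨ (¬ E y c1 ∧ ¬ E y c2 ∧ E y c3) := by
  have i1 := hS.2 c2 c1 c3 a2 y a4 a1
  have i2 := hS.2 c1 c2 c3 a2 a3 a4 y
  simp only [LzP7, LzF] at h i1 i2
  grind

theorem LzP7.tw1 (hS : LzSF E) (h : LzP7 E a1 a2 a3 a4 c1 c2 c3) {z : β}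
    (h' : LzP7 E a1 a2 a3 a4 z c2 c3) (y : α) (h1 : E y c1) : E y z := by
  by_contra h2
  have t1 := h.tyB hS y
  have t2 := h'.tyB hS y
  have i := hS.1 y a2 a3 c1 c2 c3 z
  have i' := hS.1 a4 y a1 c3 c1 z c2
  simp only [LzP7] at *
  grind

theorem LzP7.tw2 (hS : LzSF E) (h : LzP7 E a1 a2 a3 a4 c1 c2 c3) {z : β}
    (h' : LzP7 E a1 a2 a3 a4 c1 z c3) (y : α) (h1 : E y c2) : E y z := by
  by_contra h2
  have t1 := h.tyB hS y
  have t2 := h'.tyB hS y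
  have i := hS.1 a4 a3 y c3 c2 c1 z
  have i' := hS.1 a1 a2 y c1 c2 c3 z
  simp only [LzP7] at *
  grind

theorem LzP7.tw3 (hS : LzSF E) (h : LzP7 E a1 a2 a3 a4 c1 c2 c3) {z : β}
    (h' : LzP7 E a1 a2 a3 a4 c1 c2 z) (y : α) (h1 : E y c3) : E y z := by
  by_contra h2
  have t1 := h.tyB hS y
  have t2 := h'.tyB hS y
  have i := hS.1 y a3 a2 c3 c2 c1 z
  have i' := hS.1 a1 y a4 c1 c3 z c2
  simp only [LzP7] at *
  grind

theorem LzP7.clW (hS : LzSF E) (hN : LzN8 E) (hT : LzT E) (h : LzP7 E a1 a2 a3 a4 c1 c2 c3)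
    (z : β) :
    (E a1 z ∧ E a2 z ∧ E a3 z ∧ E a4 z) ∨ (¬ E a1 z ∧ ¬ E a2 z ∧ ¬ E a3 z ∧ ¬ E a4 z) ∨
    z = c1 ∨ z = c2 ∨ z = c3 ∨ (E a1 z ∧ ¬ E a2 z ∧ ¬ E a3 z ∧ E a4 z) := by
  rcases h.tyW hS hN z with t | t | t | t | t | t
  · exact Or.inl t
  · exact Or.inr (Or.inl t)
  · have h' : LzP7 E a1 a2 a3 a4 z c2 c3 := ⟨t, h.2⟩
    have := hT.1 z c1 fun y => ⟨h'.tw1 hS h y, h.tw1 hS h' y⟩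
    tauto
  · have h' : LzP7 E a1 a2 a3 a4 c1 z c3 := ⟨h.1, t, h.2.2⟩
    have := hT.1 z c2 fun y => ⟨h'.tw2 hS h y, h.tw2 hS h' y⟩
    tauto
  · have h' : LzP7 E a1 a2 a3 a4 c1 c2 z := ⟨h.1, h.2.1, t⟩
    have := hT.1 z c3 fun y => ⟨h'.tw3 hS h y, h.tw3 hS h' y⟩
    tauto
  · tauto

theorem LzP7.clB (hS : LzSF E) (hN : LzN8 E) (hT : LzT E) (h : LzP7 E a1 a2 a3 a4 c1 c2 c3)
    (y : α) :
    (E y c1 ∧ E y c2 ∧ E y c3) ∨ (¬ E y c1 ∧ ¬ E y c2 ∧ ¬ E y c3) ∨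
    y = a1 ∨ y = a2 ∨ y = a3 ∨ y = a4 := by
  have ty := fun z => h.tyW hS hN z
  rcases h.tyB hS y with t | t | t | t | t | t
  · exact Or.inl t
  · exact Or.inr (Or.inl t)
  · have h' : LzP7 E a1 y a3 a4 c1 c2 c3 := by simp only [LzP7] at *; tauto
    have := hT.2 y a2 fun z => by have := h'.tyW hS hN z; have := ty z; tauto
    tauto
  · have h' : LzP7 E y a2 a3 a4 c1 c2 c3 := by simp only [LzP7] at *; tauto
    have := hT.2 y a1 fun z => by have := h'.tyW hS hN z; have := ty z; tauto
    tauto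
  · have h' : LzP7 E a1 a2 y a4 c1 c2 c3 := by simp only [LzP7] at *; tauto
    have := hT.2 y a3 fun z => by have := h'.tyW hS hN z; have := ty z; tauto
    tauto
  · have h' : LzP7 E a1 a2 a3 y c1 c2 c3 := by simp only [LzP7] at *; tauto
    have := hT.2 y a4 fun z => by have := h'.tyW hS hN z; have := ty z; tauto
    tauto

theorem LzD2_of_cover
    (h1 : ∀ a, ∃ u w, ∀ v, E a v → v = u ∨ v = w)
    (h2 : ∀ c, ∃ u w, ∀ v, E v c → v = u ∨ v = w) : LzD2 E := by
  constructor
  · intro a x y z hx hy hz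
    obtain ⟨u, w, key⟩ := h1 a
    have := key x hx; have := key y hy; have := key z hz
    grind
  · intro a x y z hx hy hz
    obtain ⟨u, w, key⟩ := h2 a
    have := key x hx; have := key y hy; have := key z hz
    grind

set_option maxHeartbeats 2000000 in
theorem Lz_P7 [Finite α] [Finite β] (hS : LzSF E) (hN : LzN8 E) (hT : LzT E)
    (h : LzP7 E a1 a2 a3 a4 c1 c2 c3) : LzDec E ∨ LzD2 E := by
  have cB := h.clB hS hN hT
  have cW := h.clW hS hN hT
  by_cases hz : ∃ z, E a1 z ∧ ¬ E a2 z ∧ ¬ E a3 z ∧ E a4 z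
  · obtain ⟨z, hz⟩ := hz
    have h' : LzP7 E a2 a3 a4 a1 c2 c3 z := by simp only [LzP7] at *; tauto
    have cB' := h'.clB hS hN hT
    have cW' := h'.clW hS hN hT
    simp only [LzP7] at h
    by_cases hne : (∃ a, a ∉ ({a1, a2, a3, a4} : Set α)) ∨ ∃ c, c ∉ ({c1, c2, c3, z} : Set β)
    · left
      refine Lz_bim hS (A := {a1, a2, a3, a4}) (C := {c1, c2, c3, z}) ⟨?_, ?_, ?_, ?_⟩ hne
      · intro a ha
        have := cB a; have := cB' a
        simp only [Set.mem_insert_iff, Set.mem_singleton_iff, not_or] at ha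
        simp only [Set.mem_insert_iff, Set.mem_singleton_iff, forall_eq_or_imp, forall_eq]
        tauto
      · intro a ha
        have := cW a; have := cW' a
        simp only [Set.mem_insert_iff, Set.mem_singleton_iff, not_or] at ha
        simp only [Set.mem_insert_iff, Set.mem_singleton_iff, forall_eq_or_imp, forall_eq]
        tauto
      · exact ⟨a1, by simp, c1, by simp, c2, by simp, by tauto⟩
      · exact ⟨c1, by simp, a1, by simp, a3, by simp, by tauto⟩
    · right
      push Not at hne
      simp only [Set.mem_insert_iff, Set.mem_singleton_iff] at hne
      obtain ⟨hB, hW⟩ := hne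
      apply LzD2_of_cover
      · intro a
        rcases hB a with rfl | rfl | rfl | rfl
        · exact ⟨c1, z, fun v hv => by rcases hW v with rfl | rfl | rfl | rfl <;> tauto⟩
        · exact ⟨c1, c2, fun v hv => by rcases hW v with rfl | rfl | rfl | rfl <;> tauto⟩
        · exact ⟨c2, c3, fun v hv => by rcases hW v with rfl | rfl | rfl | rfl <;> tauto⟩
        · exact ⟨c3, z, fun v hv => by rcases hW v with rfl | rfl | rfl | rfl <;> tauto⟩
      · intro a
        rcases hW a with rfl | rfl | rfl | rfl
        · exact ⟨a1, a2, fun v hv => by rcases hB v with rfl | rfl | rfl | rfl <;> tauto⟩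
        · exact ⟨a2, a3, fun v hv => by rcases hB v with rfl | rfl | rfl | rfl <;> tauto⟩
        · exact ⟨a3, a4, fun v hv => by rcases hB v with rfl | rfl | rfl | rfl <;> tauto⟩
        · exact ⟨a1, a4, fun v hv => by rcases hB v with rfl | rfl | rfl | rfl <;> tauto⟩
  · simp only [LzP7] at h
    push Not at hz
    by_cases hne : (∃ a, a ∉ ({a1, a2, a3, a4} : Set α)) ∨ ∃ c, c ∉ ({c1, c2, c3} : Set β)
    · left
      refine Lz_bim hS (A := {a1, a2, a3, a4}) (C := {c1, c2, c3}) ⟨?_, ?_, ?_, ?_⟩ hne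
      · intro a ha
        have := cB a
        simp only [Set.mem_insert_iff, Set.mem_singleton_iff, not_or] at ha
        simp only [Set.mem_insert_iff, Set.mem_singleton_iff, forall_eq_or_imp, forall_eq]
        tauto
      · intro a ha
        have := cW a; have := hz a
        simp only [Set.mem_insert_iff, Set.mem_singleton_iff, not_or] at ha
        simp only [Set.mem_insert_iff, Set.mem_singleton_iff, forall_eq_or_imp, forall_eq]
        tauto
      · exact ⟨a1, by simp, c1, by simp, c2, by simp, by tauto⟩
      · exact ⟨c1, by simp, a1, by simp, a3, by simp, by tauto⟩
    · right
      push Not at hne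
      simp only [Set.mem_insert_iff, Set.mem_singleton_iff] at hne
      obtain ⟨hB, hW⟩ := hne
      apply LzD2_of_cover
      · intro a
        rcases hB a with rfl | rfl | rfl | rfl
        · exact ⟨c1, c2, fun v hv => by rcases hW v with rfl | rfl | rfl <;> tauto⟩
        · exact ⟨c1, c2, fun v hv => by rcases hW v with rfl | rfl | rfl <;> tauto⟩
        · exact ⟨c2, c3, fun v hv => by rcases hW v with rfl | rfl | rfl <;> tauto⟩
        · exact ⟨c3, c3, fun v hv => by rcases hW v with rfl | rfl | rfl <;> tauto⟩
      · intro a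
        rcases hW a with rfl | rfl | rfl
        · exact ⟨a1, a2, fun v hv => by rcases hB v with rfl | rfl | rfl | rfl <;> tauto⟩
        · exact ⟨a2, a3, fun v hv => by rcases hB v with rfl | rfl | rfl | rfl <;> tauto⟩
        · exact ⟨a3, a4, fun v hv => by rcases hB v with rfl | rfl | rfl | rfl <;> tauto⟩

end LozinP7
section LozinP7free

variable {α β : Type} {E : α → β → Prop}

/-- induced P4 + K2 -/
def LzQ (E : α → β → Prop) (c b1 b2 : α) (w x1 x2 : β) : Prop :=
  (E c w ∧ ¬ E c x1 ∧ ¬ E c x2) ∧ (¬ E b1 w ∧ E b1 x1 ∧ ¬ E b1 x2) ∧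
  (¬ E b2 w ∧ E b2 x1 ∧ E b2 x2)

def LzN7 (E : α → β → Prop) : Prop :=
  (∀ a1 a2 a3 a4 c1 c2 c3, ¬ LzP7 E a1 a2 a3 a4 c1 c2 c3) ∧
  (∀ a1 a2 a3 a4 c1 c2 c3, ¬ LzP7 (LzF E) a1 a2 a3 a4 c1 c2 c3)

theorem LzN7.fl (h : LzN7 E) : LzN7 (LzF E) := ⟨h.2, h.1⟩

theorem LzN7.co (h : LzN7 E) : LzN7 (LzC E) := by
  constructor
  · intro a1 a2 a3 a4 c1 c2 c3 hp
    apply h.1 a2 a1 a4 a3 c3 c2 c1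
    simp only [LzP7, LzC] at *
    tauto
  · intro a1 a2 a3 a4 c1 c2 c3 hp
    apply h.2 a2 a1 a4 a3 c3 c2 c1
    simp only [LzP7, LzC, LzF] at *
    tauto

theorem LzQ.fl {c b1 b2 : α} {w x1 x2 : β} (h : LzQ E c b1 b2 w x1 x2) :
    LzQ (LzF E) w x2 x1 c b2 b1 := by
  simp only [LzQ, LzF] at *; tauto

def LzRel (E : α → β → Prop) (c : α) (w : β) (b b' : α) : Prop :=
  ¬ E b w ∧ ¬ E b' w ∧ ∃ x, ¬ E c x ∧ E b x ∧ E b' x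

def LzKB (E : α → β → Prop) (c : α) (w : β) (b : α) : Set α :=
  {b' | Relation.ReflTransGen (LzRel E c w) b b'}

theorem Lz_spl (hS : LzSF E) (hN : LzN7 E) {c : α} {w : β} (hcw : E c w) {v : β} (hv : E c v)
    {b b' : α} (h : LzRel E c w b b') {x' : β} (hx' : ¬ E c x') (h1 : ¬ E b x') (h2 : E b' x') :
    E b v ↔ E b' v := by
  obtain ⟨h3, h4, x, h5, h6, h7⟩ := h
  have i := hS.1 b b' c x v w x'
  have j := hN.2 w v x x' c b b'
  simp only [LzP7, LzF] at j
  tauto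

theorem LzRel.symm {c : α} {w : β} {b b' : α} (h : LzRel E c w b b') : LzRel E c w b' b := by
  obtain ⟨h3, h4, x, h5, h6, h7⟩ := h
  exact ⟨h4, h3, x, h5, h7, h6⟩

theorem Lz_spl' (hS : LzSF E) (hN : LzN7 E) {c : α} {w : β} (hcw : E c w) {v : β} (hv : E c v)
    {b b' : α} (h : LzRel E c w b b') (hx : ∃ x', ¬ E c x' ∧ ¬ (E b x' ↔ E b' x')) :
    E b v ↔ E b' v := by
  obtain ⟨x', hx', h1⟩ := hx
  by_cases h2 : E b x'
  · exact (Lz_spl hS hN hcw hv h.symm hx' (by tauto) h2).symm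
  · exact Lz_spl hS hN hcw hv h hx' h2 (by tauto)

theorem LzKB.good {c : α} {w : β} {b1 b : α}
    (h0 : ∃ b'', LzRel E c w b1 b'' ∧ ∃ x', ¬ E c x' ∧ ¬ (E b1 x' ↔ E b'' x'))
    (h : Relation.ReflTransGen (LzRel E c w) b1 b) :
    ∃ b'', LzRel E c w b b'' ∧ ∃ x', ¬ E c x' ∧ ¬ (E b x' ↔ E b'' x') := by
  induction h with
  | refl => exact h0
  | @tail b b' _ hr ih =>
    by_cases hx : ∃ x', ¬ E c x' ∧ ¬ (E b' x' ↔ E b x')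
    · exact ⟨b, hr.symm, hx⟩
    · push Not at hx
      obtain ⟨b'', ⟨k1, k2, x, k3, k4, k5⟩, x', k6, k7⟩ := ih
      refine ⟨b'', ⟨hr.2.1, k2, x, k3, (hx x k3).2 k4, k5⟩, x', k6, ?_⟩
      rw [hx x' k6]; exact k7

theorem LzKB.hom (hS : LzSF E) (hN : LzN7 E) {c : α} {w : β} {b1 b2 b : α} {x1 x2 v : β}
    (hQ : LzQ E c b1 b2 w x1 x2) (hv : E c v) (h : b ∈ LzKB E c w b1) : E b v ↔ E b1 v := by
  have hcw := hQ.1.1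
  have h0 : ∃ b'', LzRel E c w b1 b'' ∧ ∃ x', ¬ E c x' ∧ ¬ (E b1 x' ↔ E b'' x') := by
    simp only [LzQ] at hQ
    exact ⟨b2, ⟨by tauto, by tauto, x1, by tauto⟩, x2, by tauto, by tauto⟩
  change Relation.ReflTransGen (LzRel E c w) b1 b at h
  induction h with
  | refl => rfl
  | @tail b b' hb hr ih =>
    refine Iff.trans ?_ ih
    by_cases hx : ∃ x', ¬ E c x' ∧ ¬ (E b' x' ↔ E b x')
    · exact Lz_spl' hS hN hcw hv hr.symm hx
    · push Not at hx
      obtain ⟨b'', hk, x', k6, k7⟩ := LzKB.good h0 hb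
      rw [Lz_spl' hS hN hcw hv hk ⟨x', k6, k7⟩]
      obtain ⟨k1, k2, x, k3, k4, k5⟩ := hk
      refine Lz_spl' hS hN hcw hv ⟨hr.2.1, k2, x, k3, (hx x k3).2 k4, k5⟩ ⟨x', k6, ?_⟩
      rw [hx x' k6]; exact k7

theorem LzKB.notw {c : α} {w : β} {b1 b : α} (h1 : ¬ E b1 w) (h : b ∈ LzKB E c w b1) :
    ¬ E b w := by
  change Relation.ReflTransGen (LzRel E c w) b1 b at h
  induction h with
  | refl => exact h1
  | tail _ hr _ => exact hr.2.1

theorem LzKB.sub {c : α} {w : β} {b1 b2 b : α} {x1 x2 x : β}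
    (hQ : LzQ E c b1 b2 w x1 x2) (h : b ∈ LzKB E c w b1) (hx : ¬ E c x) (hb : E b x) :
    x ∈ LzKB (LzF E) w c x2 := by
  change Relation.ReflTransGen (LzRel E c w) b1 b at h
  change Relation.ReflTransGen (LzRel (LzF E) w c) x2 x
  simp only [LzQ] at hQ
  induction h generalizing x with
  | refl =>
    have r1 : LzRel (LzF E) w c x2 x1 := ⟨by tauto, by tauto, b2, by simp only [LzF]; tauto⟩
    have r2 : LzRel (LzF E) w c x1 x := ⟨by tauto, by tauto, b1, by simp only [LzF]; tauto⟩
    exact .tail (.single r1) r2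
  | @tail b b' hb1 hr ih =>
    obtain ⟨h1, h2, x0, h3, h4, h5⟩ := hr
    exact .tail (ih h3 h4) ⟨h3, hx, b', h2, h5, hb⟩

theorem Lz_Q [Finite α] [Finite β] (hS : LzSF E) (hN : LzN7 E) {c b1 b2 : α} {w x1 x2 : β}
    (hQ : LzQ E c b1 b2 w x1 x2) : LzDec E := by
  have hb1 : b1 ∈ LzKB E c w b1 := Relation.ReflTransGen.refl
  have hb2 : b2 ∈ LzKB E c w b1 := by
    simp only [LzQ] at hQ
    exact Relation.ReflTransGen.single ⟨by tauto, by tauto, x1, by tauto⟩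
  refine Lz_bim hS (A := LzKB E c w b1) (C := {x | ¬ E c x ∧ ∃ b ∈ LzKB E c w b1, E b x})
    ⟨?_, ?_, ?_, ?_⟩ (Or.inl ⟨c, fun hc => LzKB.notw hQ.2.1.1 hc hQ.1.1⟩)
  · intro u hu
    by_cases huw : E u w
    · have key : ∀ x, (¬ E c x ∧ ∃ b ∈ LzKB E c w b1, E b x) → (E u x ↔ E u x2) := by
        rintro x ⟨hx, b, hb, hbx⟩
        exact LzKB.hom hS.fl hN.fl hQ.fl huw (LzKB.sub hQ hb hx hbx)
      by_cases h2 : E u x2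
      · exact Or.inl fun x hx => (key x hx).2 h2
      · exact Or.inr fun x hx h => h2 ((key x hx).1 h)
    · right
      rintro x ⟨hx, b, hb, hbx⟩ hux
      exact hu (Relation.ReflTransGen.tail hb ⟨LzKB.notw hQ.2.1.1 hb, huw, x, hx, hbx, hux⟩)
  · intro v hv
    by_cases hcv : E c v
    · have key := fun b hb => LzKB.hom hS hN hQ hcv (b := b) hb
      by_cases h2 : E b1 v
      · exact Or.inl fun x hx => (key x hx).2 h2
      · exact Or.inr fun x hx h => h2 ((key x hx).1 h)
    · right
      intro b hb hbv
      exact hv ⟨hcv, b, hb, hbv⟩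
  · simp only [LzQ] at hQ
    exact ⟨b1, hb1, x1, ⟨by tauto, b1, hb1, by tauto⟩, x2, ⟨by tauto, b2, hb2, by tauto⟩, by tauto⟩
  · simp only [LzQ] at hQ
    exact ⟨x2, ⟨by tauto, b2, hb2, by tauto⟩, b2, hb2, b1, hb1, by tauto⟩

def LzNQ (E : α → β → Prop) : Prop :=
  (∀ c b1 b2 w x1 x2, ¬ LzQ E c b1 b2 w x1 x2) ∧
  (∀ c b1 b2 w x1 x2, ¬ LzQ (LzC E) c b1 b2 w x1 x2)

theorem LzNQ.fl (h : LzNQ E) : LzNQ (LzF E) :=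
  ⟨fun _ _ _ _ _ _ hq => h.1 _ _ _ _ _ _ hq.fl,
    fun _ _ _ _ _ _ hq => h.2 _ _ _ _ _ _ (LzQ.fl (E := LzF (LzC E)) hq)⟩

theorem Lz_2K2_tw (hQ : LzNQ E) (hT : LzT E) {c b : α} {u w v : β} (h1 : E c u) (h2 : E b w)
    (h3 : ¬ E c w) (h4 : ¬ E b u) (h5 : E c v) (h6 : ¬ E b v) : v = u := by
  apply hT.1
  intro y
  have i1 := hQ.1 b y c w u v
  have i2 := hQ.1 b y c w v u
  have i3 := hQ.2 c y b w v u
  have i4 := hQ.2 c y b w u v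
  simp only [LzQ, LzC] at i1 i2 i3 i4
  grind

theorem Lz_2K2 [Finite α] [Finite β] (hS : LzSF E) (hQ : LzNQ E) (hT : LzT E) {c b : α} {u w : β}
    (h1 : E c u) (h2 : E b w) (h3 : ¬ E c w) (h4 : ¬ E b u) : LzDec E := by
  have mb : ∀ b w, E b w → ¬ E c w → ¬ E b u → b ∈ {b | b = c ∨ ∃ w, E b w ∧ ¬ E c w ∧ ¬ E b u} :=
    fun b w i j k => Or.inr ⟨w, i, j, k⟩
  have mw : ∀ b w, E b w → ¬ E c w → ¬ E b u → w ∈ {w | w = u ∨ ∃ b, E b w ∧ ¬ E c w ∧ ¬ E b u} :=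
    fun b w i j k => Or.inr ⟨b, i, j, k⟩
  by_cases hne : (∃ b, b ∉ {b | b = c ∨ ∃ w, E b w ∧ ¬ E c w ∧ ¬ E b u}) ∨
      ∃ w, w ∉ {w | w = u ∨ ∃ b, E b w ∧ ¬ E c w ∧ ¬ E b u}
  · refine Lz_bim hS ⟨?_, ?_, ?_, ?_⟩ hne
    · intro y hy
      have key : ∀ w ∈ {w | w = u ∨ ∃ b, E b w ∧ ¬ E c w ∧ ¬ E b u}, (E y w ↔ E y u) := by
        rintro w (rfl | ⟨b, k1, k2, k3⟩)
        · rfl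
        · constructor
          · intro i
            by_contra j
            exact hy (mb y w i k2 j)
          · intro i
            by_contra j
            exact hy (Or.inl (Lz_2K2_tw (E := LzF E) hQ.fl hT.fl (c := u) (b := w) (u := c)
              (w := b) h1 k1 k3 k2 i j))
      by_cases h : E y u
      · exact Or.inl fun x hx => (key x hx).2 h
      · exact Or.inr fun x hx i => h ((key x hx).1 i)
    · intro v hv
      have key : ∀ b ∈ {b | b = c ∨ ∃ w, E b w ∧ ¬ E c w ∧ ¬ E b u}, (E b v ↔ E c v) := by
        rintro b (rfl | ⟨w, k1, k2, k3⟩)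
        · rfl
        · constructor
          · intro i
            by_contra j
            exact hv (mw b v i j k3)
          · intro i
            by_contra j
            exact hv (Or.inl (Lz_2K2_tw hQ hT h1 k1 k2 k3 i j))
      by_cases h : E c v
      · exact Or.inl fun x hx => (key x hx).2 h
      · exact Or.inr fun x hx i => h ((key x hx).1 i)
    · exact ⟨c, Or.inl rfl, u, Or.inl rfl, w, mw b w h2 h3 h4, h1, h3⟩
    · exact ⟨u, Or.inl rfl, c, Or.inl rfl, b, mb b w h2 h3 h4, h1, h4⟩
  · push Not at hne
    refine ⟨{c}, {u}, Or.inl ⟨c, rfl⟩, Or.inl ⟨b, fun h => h4 (h ▸ h1)⟩, Or.inl ?_⟩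
    intro a z haz
    have i1 := hne.1 a
    have i2 := hne.2 z
    simp only [Set.mem_ofPred_eq] at i1 i2
    simp only [Set.mem_singleton_iff]
    constructor
    · rintro rfl
      rcases i2 with h | ⟨_, _, h, _⟩
      · exact h
      · exact absurd haz h
    · rintro rfl
      rcases i1 with h | ⟨_, _, _, h⟩
      · exact h
      · exact absurd haz h

theorem Lz_no2K2 [Finite α] [Finite β]
    (h : ∀ c b u w, E c u → E b w → ¬ E c w → ¬ E b u → False) : LzDec E ∨ LzD2 E := by
  by_cases hα : IsEmpty α
  · exact Or.inr ⟨fun a => isEmptyElim a, fun c a => isEmptyElim a⟩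
  by_cases hβ : IsEmpty β
  · exact Or.inr ⟨fun c a => isEmptyElim a, fun a => isEmptyElim a⟩
  rw [not_isEmpty_iff] at hα hβ
  left
  obtain ⟨w, hw⟩ := Finite.exists_max (fun w : β => Set.ncard {b | E b w})
  have tot : ∀ w' b, E b w' → E b w := by
    intro w' b hb
    by_contra hn
    have hs : {b | E b w} ⊂ {b | E b w'} := by
      refine ⟨fun y hy => ?_, fun hs => hn (hs hb)⟩
      by_contra hy'
      exact h y b w w' hy hb hy' hn
    have := Set.ncard_lt_ncard hs (Set.toFinite _)
    have := hw w'
    omega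
  by_cases hb : ∃ b, ¬ E b w
  · obtain ⟨b, hb⟩ := hb
    refine ⟨{b}, ∅, Or.inl ⟨b, rfl⟩, Or.inr ⟨w, by simp⟩, Or.inl fun a z haz => ?_⟩
    simp only [Set.mem_singleton_iff, Set.mem_empty_iff_false, iff_false]
    rintro rfl
    exact hb (tot z a haz)
  · push Not at hb
    obtain ⟨a⟩ := hα
    refine ⟨Set.univ, {w}ᶜ, Or.inl ⟨a, trivial⟩, Or.inr ⟨w, by simp⟩,
      Or.inr (Or.inr fun a z => ⟨fun _ hz => ?_, fun h => absurd trivial h⟩)⟩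
    have : z = w := by simpa using hz
    exact this ▸ hb a

theorem Lz_main [Finite α] [Finite β] (hS : LzSF E) (hT : LzT E) :
    LzDec E ∨ LzD2 E ∨ LzD2 (LzC E) := by
  by_cases h1 : ∃ a1 a2 a3 a4 c1 c2 c3 c4, LzP8 E a1 a2 a3 a4 c1 c2 c3 c4
  · obtain ⟨a1, a2, a3, a4, c1, c2, c3, c4, h⟩ := h1
    have := Lz_P8 hS hT h
    tauto
  by_cases h2 : ∃ a1 a2 a3 a4 c1 c2 c3 c4, LzP8 (LzC E) a1 a2 a3 a4 c1 c2 c3 c4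
  · obtain ⟨a1, a2, a3, a4, c1, c2, c3, c4, h⟩ := h2
    rcases Lz_P8 hS.co hT.co h with h | h
    · exact Or.inl h.co
    · tauto
  have hN : LzN8 E := by push Not at h1 h2; exact ⟨h1, h2⟩
  have hN' : LzN8 (LzF E) := ⟨fun a1 a2 a3 a4 c1 c2 c3 c4 h => hN.1 _ _ _ _ _ _ _ _ h.rev,
    fun a1 a2 a3 a4 c1 c2 c3 c4 h => hN.2 _ _ _ _ _ _ _ _ (LzP8.rev (E := LzF (LzC E)) h)⟩
  by_cases h3 : ∃ a1 a2 a3 a4 c1 c2 c3, LzP7 E a1 a2 a3 a4 c1 c2 c3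
  · obtain ⟨a1, a2, a3, a4, c1, c2, c3, h⟩ := h3
    have := Lz_P7 hS hN hT h
    tauto
  by_cases h4 : ∃ a1 a2 a3 a4 c1 c2 c3, LzP7 (LzF E) a1 a2 a3 a4 c1 c2 c3
  · obtain ⟨a1, a2, a3, a4, c1, c2, c3, h⟩ := h4
    rcases Lz_P7 hS.fl hN' hT.fl h with h | h
    · exact Or.inl h.fl
    · exact Or.inr (Or.inl h.fl)
  have hN7 : LzN7 E := by push Not at h3 h4; exact ⟨h3, h4⟩
  by_cases h5 : ∃ c b1 b2 w x1 x2, LzQ E c b1 b2 w x1 x2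
  · obtain ⟨c, b1, b2, w, x1, x2, h⟩ := h5
    exact Or.inl (Lz_Q hS hN7 h)
  by_cases h6 : ∃ c b1 b2 w x1 x2, LzQ (LzC E) c b1 b2 w x1 x2
  · obtain ⟨c, b1, b2, w, x1, x2, h⟩ := h6
    exact Or.inl (Lz_Q hS.co hN7.co h).co
  have hNQ : LzNQ E := by push Not at h5 h6; exact ⟨h5, h6⟩
  by_cases h7 : ∀ c b u w, E c u → E b w → ¬ E c w → ¬ E b u → False
  · have := Lz_no2K2 h7
    tauto
  · push Not at h7
    obtain ⟨c, b, u, w, k1, k2, k3, k4, -⟩ := h7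
    exact Or.inl (Lz_2K2 hS hNQ hT k1 k2 k3 k4)

end LozinP7free
section LozinTransfer

variable {V : Type} [DecidableEq V]

def LzG (G : BipGraph V) (a : {x // x ∈ G.B}) (c : {x // x ∈ G.W}) : Prop := (a.1, c.1) ∈ G.E

theorem LzG_nbw (G : BipGraph V) {x : V} (h1 : x ∈ G.B) (h2 : x ∈ G.W) : False :=
  Finset.disjoint_left.1 G.disj h1 h2

theorem LzG_bw (G : BipGraph V) (a : {x // x ∈ G.B}) (c : {x // x ∈ G.W}) :
    Adjv G a.1 c.1 ↔ LzG G a c :=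
  ⟨fun h => h.elim id fun h => (LzG_nbw G (G.E_sub _ h).1 c.2).elim, Or.inl⟩

theorem LzG_wb (G : BipGraph V) (a : {x // x ∈ G.B}) (c : {x // x ∈ G.W}) :
    Adjv G c.1 a.1 ↔ LzG G a c :=
  ⟨fun h => h.elim (fun h => (LzG_nbw G (G.E_sub _ h).1 c.2).elim) id, Or.inr⟩

theorem LzG_bb (G : BipGraph V) (a c : {x // x ∈ G.B}) : ¬ Adjv G a.1 c.1 :=
  fun h => h.elim (fun h => LzG_nbw G c.2 (G.E_sub _ h).2) (fun h => LzG_nbw G a.2 (G.E_sub _ h).2)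

theorem LzG_ww (G : BipGraph V) (a c : {x // x ∈ G.W}) : ¬ Adjv G a.1 c.1 :=
  fun h => h.elim (fun h => LzG_nbw G (G.E_sub _ h).1 a.2) (fun h => LzG_nbw G (G.E_sub _ h).1 c.2)

theorem LzG_memB (G : BipGraph V) {x y : V} (hx : x ∈ G.B) (h : Adjv G x y) :
    ∃ c : {x // x ∈ G.W}, c.1 = y :=
  h.elim (fun h => ⟨⟨y, (G.E_sub _ h).2⟩, rfl⟩) (fun h => (LzG_nbw G hx (G.E_sub _ h).2).elim)

theorem LzG_memW (G : BipGraph V) {x y : V} (hx : x ∈ G.W) (h : Adjv G x y) :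
    ∃ c : {x // x ∈ G.B}, c.1 = y :=
  h.elim (fun h => (LzG_nbw G (G.E_sub _ h).1 hx).elim) (fun h => ⟨⟨y, (G.E_sub _ h).1⟩, rfl⟩)

theorem LzG_twin (G : BipGraph V) (h : TwinFree G) : LzT (LzG G) := by
  constructor
  · intro z z' H
    apply Subtype.ext
    apply h _ (Finset.mem_union_right _ z.2) _ (Finset.mem_union_right _ z'.2)
    ext y
    constructor
    · intro hy
      obtain ⟨a, rfl⟩ := LzG_memW G z.2 hy
      exact (LzG_wb G a z').2 ((H a).1 ((LzG_wb G a z).1 hy))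
    · intro hy
      obtain ⟨a, rfl⟩ := LzG_memW G z'.2 hy
      exact (LzG_wb G a z).2 ((H a).2 ((LzG_wb G a z').1 hy))
  · intro z z' H
    apply Subtype.ext
    apply h _ (Finset.mem_union_left _ z.2) _ (Finset.mem_union_left _ z'.2)
    ext y
    constructor
    · intro hy
      obtain ⟨a, rfl⟩ := LzG_memB G z.2 hy
      exact (LzG_bw G z' a).2 ((H a).1 ((LzG_bw G z a).1 hy))
    · intro hy
      obtain ⟨a, rfl⟩ := LzG_memB G z'.2 hy
      exact (LzG_bw G z a).2 ((H a).2 ((LzG_bw G z' a).1 hy))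

theorem LzG_starInj (G : BipGraph V) (h : Star123Free G) (v : Fin 7 → V)
    (hm : ∀ i, v i ∈ G.B ∪ G.W)
    (hv : ∀ i j : Fin 7, Adjv G (v i) (v j) ↔
      (((i : ℕ), (j : ℕ)) ∈ starEdges ∨ ((j : ℕ), (i : ℕ)) ∈ starEdges)) : False := by
  refine h ⟨v, ?_, hm, hv⟩
  have key : ∀ i j : Fin 7, (∀ k : Fin 7,
      (((i : ℕ), (k : ℕ)) ∈ starEdges ∨ ((k : ℕ), (i : ℕ)) ∈ starEdges) ↔
      (((j : ℕ), (k : ℕ)) ∈ starEdges ∨ ((k : ℕ), (j : ℕ)) ∈ starEdges)) → i = j := by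
    unfold starEdges
    decide
  intro i j hij
  apply key
  intro k
  rw [← hv, ← hv, hij]

theorem LzG_star (G : BipGraph V) (h : Star123Free G) : LzSF (LzG G) := by
  constructor
  · intro x1 x3 x5 y2 y4 y6 y7 h1 h2 h3 h4 h5 h6 h7 h8 h9 h10 h11 h12
    apply LzG_starInj G h ![x1.1, y2.1, x3.1, y4.1, x5.1, y6.1, y7.1]
    · intro i
      fin_cases i <;> simp
    · intro i j
      fin_cases i <;> fin_cases j <;> simp [starEdges, LzG_bw, LzG_wb, LzG_bb, LzG_ww, *]
  · intro x1 x3 x5 y2 y4 y6 y7 h1 h2 h3 h4 h5 h6 h7 h8 h9 h10 h11 h12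
    simp only [LzF] at *
    apply LzG_starInj G h ![x1.1, y2.1, x3.1, y4.1, x5.1, y6.1, y7.1]
    · intro i
      fin_cases i <;> simp
    · intro i j
      fin_cases i <;> fin_cases j <;> simp [starEdges, LzG_bw, LzG_wb, LzG_bb, LzG_ww, *]

theorem LzG_deg (G : BipGraph V) (h : LzD2 (LzG G)) : MaxDeg2 G := by
  intro x hx
  by_contra hn
  push Not at hn
  rw [Set.two_lt_ncard_iff (Set.finite_of_ncard_pos (by omega))] at hn
  obtain ⟨p, q, r, hp, hq, hr, h1, h2, h3⟩ := hn
  simp only [Set.mem_ofPred_eq] at hp hq hr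
  rcases Finset.mem_union.1 hx with hx | hx
  · obtain ⟨p, rfl⟩ := LzG_memB G hx hp
    obtain ⟨q, rfl⟩ := LzG_memB G hx hq
    obtain ⟨r, rfl⟩ := LzG_memB G hx hr
    have := h.1 ⟨x, hx⟩ p q r ((LzG_bw G ⟨x, hx⟩ _).1 hp) ((LzG_bw G ⟨x, hx⟩ _).1 hq)
      ((LzG_bw G ⟨x, hx⟩ _).1 hr)
    rcases this with rfl | rfl | rfl <;> simp_all
  · obtain ⟨p, rfl⟩ := LzG_memW G hx hp
    obtain ⟨q, rfl⟩ := LzG_memW G hx hq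
    obtain ⟨r, rfl⟩ := LzG_memW G hx hr
    have := h.2 ⟨x, hx⟩ p q r ((LzG_wb G _ ⟨x, hx⟩).1 hp) ((LzG_wb G _ ⟨x, hx⟩).1 hq)
      ((LzG_wb G _ ⟨x, hx⟩).1 hr)
    rcases this with rfl | rfl | rfl <;> simp_all

theorem LzG_co (G : BipGraph V) : LzG (bipCompl G) = LzC (LzG G) := by
  funext a c
  apply propext
  exact ⟨fun h => h.2.2, fun h => ⟨a.2, c.2, h⟩⟩

end LozinTransfer

/-- Lozin's theorem, Theorem 1 of the paper. -/
theorem lozin_decomposition {V : Type} [DecidableEq V] (G : BipGraph V)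
    (htwin : TwinFree G) (hstar : Star123Free G) :
    (∃ X Y : Finset V, X.Nonempty ∧ Y.Nonempty ∧ Disjoint X Y ∧
        X ∪ Y = G.B ∪ G.W ∧ Nonadj G X Y) ∨
    (∃ X Y : Finset V, X.Nonempty ∧ Y.Nonempty ∧ Disjoint X Y ∧
        X ∪ Y = G.B ∪ G.W ∧ FullyAdj G X Y) ∨
    (∃ X Y : Finset V, X.Nonempty ∧ Y.Nonempty ∧ Disjoint X Y ∧
        X ∪ Y = G.B ∪ G.W ∧ LeftAdj G X Y) ∨
    MaxDeg2 G ∨ MaxDeg2 (bipCompl G) := by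
  rcases Lz_main (LzG_star G hstar) (LzG_twin G htwin) with h | h | h
  · obtain ⟨A, C, n1, n2, h⟩ := h
    classical
    let X : Finset V := (G.B ∪ G.W).filter fun x => (∃ h, (⟨x, h⟩ : {x // x ∈ G.B}) ∈ A) ∨
      (∃ h, (⟨x, h⟩ : {x // x ∈ G.W}) ∈ C)
    have mB : ∀ a : {x // x ∈ G.B}, a.1 ∈ X ↔ a ∈ A := by
      rintro ⟨a, ha⟩
      simp only [X, Finset.mem_filter, Finset.mem_union]
      constructor
      · rintro ⟨_, ⟨_, h⟩ | ⟨h', _⟩⟩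
        · exact h
        · exact (LzG_nbw G ha h').elim
      · intro h
        exact ⟨Or.inl ha, Or.inl ⟨ha, h⟩⟩
    have mW : ∀ a : {x // x ∈ G.W}, a.1 ∈ X ↔ a ∈ C := by
      rintro ⟨a, ha⟩
      simp only [X, Finset.mem_filter, Finset.mem_union]
      constructor
      · rintro ⟨_, ⟨h', _⟩ | ⟨_, h⟩⟩
        · exact (LzG_nbw G h' ha).elim
        · exact h
      · intro h
        exact ⟨Or.inr ha, Or.inr ⟨ha, h⟩⟩
    have nX : X.Nonempty := by
      rcases n1 with ⟨a, ha⟩ | ⟨a, ha⟩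
      · exact ⟨a, (mB a).2 ha⟩
      · exact ⟨a, (mW a).2 ha⟩
    have nY : ((G.B ∪ G.W) \ X).Nonempty := by
      rcases n2 with ⟨a, ha⟩ | ⟨a, ha⟩
      · exact ⟨a, Finset.mem_sdiff.2 ⟨Finset.mem_union_left _ a.2, fun h => ha ((mB a).1 h)⟩⟩
      · exact ⟨a, Finset.mem_sdiff.2 ⟨Finset.mem_union_right _ a.2, fun h => ha ((mW a).1 h)⟩⟩
    have dj : Disjoint X ((G.B ∪ G.W) \ X) := Finset.disjoint_sdiff
    have un : X ∪ ((G.B ∪ G.W) \ X) = G.B ∪ G.W :=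
      Finset.union_sdiff_of_subset (Finset.filter_subset _ _)
    rcases h with h | h | h
    · refine Or.inl ⟨X, _, nX, nY, dj, un, fun x hx y hy => ⟨fun he => ?_, fun he => ?_⟩⟩
      · have hs := G.E_sub _ he
        have := h ⟨x, hs.1⟩ ⟨y, hs.2⟩ he
        rw [← mB, ← mW] at this
        exact (Finset.mem_sdiff.1 hy).2 (this.1 hx)
      · have hs := G.E_sub _ he
        have := h ⟨y, hs.1⟩ ⟨x, hs.2⟩ he
        rw [← mB, ← mW] at this
        exact (Finset.mem_sdiff.1 hy).2 (this.2 hx)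
    · refine Or.inr (Or.inl ⟨X, _, nX, nY, dj, un, fun x hx y hy => ?_, fun x hx y hy => ?_⟩)
      · rw [Finset.mem_inter] at hx hy
        by_contra he
        have := h ⟨x, hx.2⟩ ⟨y, hy.2⟩ he
        rw [← mB, ← mW] at this
        exact (Finset.mem_sdiff.1 hy.1).2 (this.1 hx.1)
      · rw [Finset.mem_inter] at hx hy
        by_contra he
        have := h ⟨x, hx.2⟩ ⟨y, hy.2⟩ he
        rw [← mB, ← mW] at this
        exact (Finset.mem_sdiff.1 hx.1).2 (this.2 hy.1)
    · refine Or.inr (Or.inr (Or.inl ⟨X, _, nX, nY, dj, un, fun x hx y hy => ?_,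
        fun x hx y hy => ?_⟩))
      · rw [Finset.mem_inter] at hx hy
        have := h ⟨x, hx.2⟩ ⟨y, hy.2⟩
        rw [← mB, ← mW] at this
        exact this.1 hx.1 (Finset.mem_sdiff.1 hy.1).2
      · rw [Finset.mem_inter] at hx hy
        have := h ⟨x, hx.2⟩ ⟨y, hy.2⟩
        rw [← mB, ← mW] at this
        exact this.2 (Finset.mem_sdiff.1 hx.1).2 hy.1
  · exact Or.inr (Or.inr (Or.inr (Or.inl (LzG_deg G h))))
  · rw [← LzG_co] at h
    exact Or.inr (Or.inr (Or.inr (Or.inr (LzG_deg _ h))))
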